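/- Let p be a prime, e ≥ 1, q = p^e, and let Ω = AlgebraicClosure (ZMod p). Let f_1, …, f_r ∈ MvPolynomial (Fin n) Ω be polynomials all of whose coefficients c satisfy c^q = c (i.e., all coefficients lie in the subfield of Ω with q elements). For m ≥ 1 set N_m = Nat.card {x : Fin n → Ω | (∀ j, f_j evaluated at x is 0) ∧ (∀ i, (x i)^{q^m} = x i)}, the number of solutions with coordinates in the subfield with q^m elements. Then the formal power series Σ_{m≥1} N_m t^m ∈ ℚ[[t]] is rational. -/

import Mathlib

namespace DworkRat
open Finset

/-- Kronecker's criterion: if all large Hankel determinants vanish, the sequence is linearly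
recurrent. -/
theorem kronecker (a : ℕ → ℚ) (k0 : ℕ)
    (h : ∀ k, k0 ≤ k → (Matrix.of fun i j : Fin k => a (i + j)).det = 0) :
    ∃ (r : ℕ) (c : ℕ → ℚ), c r = 1 ∧ ∀ i, ∑ l ∈ range (r + 1), c l * a (i + l) = 0 := by
  classical
  obtain ⟨r, hr, hmax⟩ : ∃ r, (Matrix.of fun i j : Fin r => a (i + j)).det ≠ 0 ∧
      ∀ k, r < k → (Matrix.of fun i j : Fin k => a (i + j)).det = 0 := by
    have h0 : (Matrix.of fun i j : Fin 0 => a (i + j)).det ≠ 0 := by simp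
    let P : ℕ → Prop := fun k => (Matrix.of fun i j : Fin k => a (i + j)).det ≠ 0
    have hP0 : P 0 := h0
    refine ⟨Nat.findGreatest P k0, Nat.findGreatest_spec (P := P) (Nat.zero_le _) hP0, ?_⟩
    intro k hk
    by_cases hk0 : k ≤ k0
    · have := Nat.findGreatest_is_greatest hk hk0
      simpa [P] using this
    · exact h k (by omega)
  set H : Matrix (Fin r) (Fin r) ℚ := Matrix.of fun i j : Fin r => a (i + j) with hH
  have hu : IsUnit H.det := isUnit_iff_ne_zero.mpr hr
  let c' : Fin r → ℚ := H⁻¹.mulVec (fun i => - a (i + r))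
  have hc' : H.mulVec c' = fun i : Fin r => - a (i + r) := by
    simp only [c', Matrix.mulVec_mulVec, Matrix.mul_nonsing_inv _ hu, Matrix.one_mulVec]
  let c : ℕ → ℚ := fun l => if hl : l < r then c' ⟨l, hl⟩ else 1
  refine ⟨r, c, by simp [c], ?_⟩
  set b : ℕ → ℚ := fun i => ∑ l ∈ range (r + 1), c l * a (i + l) with hb
  suffices ∀ s, b s = 0 from this
  intro s
  induction s using Nat.strong_induction_on with
  | _ s ih =>
  by_cases hs : s < r
  · have := congrFun hc' ⟨s, hs⟩
    simp only [Matrix.mulVec, dotProduct, hH, Matrix.of_apply] at this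
    rw [hb]
    simp only
    rw [sum_range_succ, ← Fin.sum_univ_eq_sum_range (fun l => c l * a (s + l))]
    have hcr : c r = 1 := by simp [c]
    rw [hcr, one_mul]
    have h2 : ∑ i : Fin r, c i * a (s + i) = ∑ i : Fin r, a (s + i) * c' i := by
      refine sum_congr rfl fun i _ => ?_
      simp [c, mul_comm]
    rw [h2, this]; ring
  by_contra hbs
  have hdet := hmax (s + 1) (by omega)
  obtain ⟨v, hv0, hv⟩ := Matrix.exists_vecMul_eq_zero_iff.mpr hdet
  let w : ℕ → ℚ := fun i => if hi : i < s + 1 then v ⟨i, hi⟩ else 0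
  have hwv : ∀ i : Fin (s + 1), w i = v i := fun i => dif_pos i.2
  have hw : ∀ j, j ≤ s → ∑ i ∈ range (s + 1), w i * a (i + j) = 0 := by
    intro j hj
    have := congrFun hv ⟨j, by omega⟩
    simp only [Matrix.vecMul, dotProduct, Matrix.of_apply, Pi.zero_apply] at this
    rw [← Fin.sum_univ_eq_sum_range (fun i => w i * a (i + j)), ← this]
    refine sum_congr rfl fun i _ => ?_
    rw [hwv]
  have hwb : ∀ j, j ≤ s - r → ∑ i ∈ range (s + 1), w i * b (i + j) = 0 := by
    intro j hj
    simp only [hb, mul_sum]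
    rw [sum_comm]
    refine sum_eq_zero fun l hl => ?_
    rw [mem_range] at hl
    have := hw (j + l) (by omega)
    calc ∑ x ∈ range (s + 1), w x * (c l * a (x + j + l))
        = c l * ∑ x ∈ range (s + 1), w x * a (x + (j + l)) := by
          rw [mul_sum]; refine sum_congr rfl fun x _ => ?_
          rw [add_assoc]; ring
      _ = 0 := by rw [this, mul_zero]
  have hw0 : ∀ j, j ≤ s - r → w (s - j) = 0 := by
    intro j
    induction j using Nat.strong_induction_on with
    | _ j ihj =>
    intro hj
    have h1 := hwb j hj
    rw [sum_eq_single (s - j)] at h1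
    · rw [show s - j + j = s by omega] at h1
      exact (mul_eq_zero.mp h1).resolve_right hbs
    · intro i hi hne
      rw [mem_range] at hi
      by_cases hij : i + j < s
      · rw [ih _ hij, mul_zero]
      · have := ihj (s - i) (by omega) (by omega)
        rw [show s - (s - i) = i by omega] at this
        rw [this, zero_mul]
    · intro hi; simp at hi
  have hw0' : ∀ i, r ≤ i → w i = 0 := by
    intro i hi
    by_cases his : i ≤ s
    · have := hw0 (s - i) (by omega)
      rwa [show s - (s - i) = i by omega] at this
    · simp [w]; omega
  have hvr : (fun i : Fin r => w i) = 0 := by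
    refine Matrix.eq_zero_of_vecMul_eq_zero hr ?_
    ext j
    simp only [Matrix.vecMul, dotProduct, Pi.zero_apply]
    have := hw j (by omega)
    rw [← sum_subset (s₁ := range r) (range_subset_range.mpr (by omega))] at this
    · rw [← Fin.sum_univ_eq_sum_range (fun i => w i * a (i + j))] at this
      simpa [H] using this
    · intro x _ hx
      rw [hw0' x (by simpa using hx), zero_mul]
  apply hv0
  ext i
  have : w i = 0 := by
    by_cases hi : (i : ℕ) < r
    · exact congrFun hvr ⟨i, hi⟩
    · exact hw0' _ (by omega)
  rw [← hwv i, this]; rfl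

/-- A linearly recurrent sequence has rational generating function. -/
theorem rational_of_recurrence (a : ℕ → ℚ) (r : ℕ) (c : ℕ → ℚ) (hc : c r = 1)
    (h : ∀ i, ∑ l ∈ range (r + 1), c l * a (i + l) = 0) :
    ∃ A B : Polynomial ℚ, B ≠ 0 ∧ (B : PowerSeries ℚ) * PowerSeries.mk a = (A : PowerSeries ℚ) := by
  let B : Polynomial ℚ := ∑ l ∈ range (r + 1), Polynomial.monomial (r - l) (c l)
  have hBc : ∀ k, k ≤ r → B.coeff k = c (r - k) := by
    intro k hk
    simp only [B, Polynomial.finsetSum_coeff, Polynomial.coeff_monomial]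
    rw [sum_eq_single (r - k)]
    · rw [if_pos (by omega)]
    · intro b hb hne
      rw [mem_range] at hb
      rw [if_neg (by omega)]
    · intro h; simp at h
  have hBc' : ∀ k, r < k → B.coeff k = 0 := by
    intro k hk
    simp only [B, Polynomial.finsetSum_coeff, Polynomial.coeff_monomial]
    refine sum_eq_zero fun b hb => ?_
    rw [if_neg (by omega)]
  refine ⟨PowerSeries.trunc r ((B : PowerSeries ℚ) * PowerSeries.mk a), B, ?_, ?_⟩
  · intro hB
    have := hBc 0 (by omega)
    rw [hB] at this
    simp [hc] at this
  · ext N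
    rw [Polynomial.coeff_coe, PowerSeries.coeff_trunc]
    split_ifs with hN
    · rfl
    · rw [PowerSeries.coeff_mul, Nat.sum_antidiagonal_eq_sum_range_succ_mk]
      simp only [Polynomial.coeff_coe, PowerSeries.coeff_mk]
      rw [← sum_subset (s₁ := range (r + 1)) (range_subset_range.mpr (by omega))]
      · rw [← h (N - r), ← sum_range_reflect]
        refine sum_congr rfl fun x hx => ?_
        rw [mem_range] at hx
        rw [hBc _ (by omega)]
        congr 2 <;> omega
      · intro x _ hx
        rw [hBc' x (by simpa using hx), zero_mul]

end DworkRat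


namespace DworkRat
open Finset

section Fil
variable {R : Type*} [CommRing R]

/-- Power series whose `j`-th coefficient is divisible by `l ^ (C * (j - K))`. -/
def Fil (l : R) (C K : ℕ) : Submodule R (PowerSeries R) where
  carrier := {f | ∀ j, l ^ (C * (j - K)) ∣ PowerSeries.coeff j f}
  add_mem' := by
    intro a b ha hb j
    rw [map_add]; exact dvd_add (ha j) (hb j)
  zero_mem' := by intro j; simp
  smul_mem' := by
    intro c x hx j
    rw [PowerSeries.coeff_smul]
    exact Dvd.dvd.mul_left (hx j) c

theorem mem_Fil {l : R} {C K : ℕ} {f : PowerSeries R} :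
    f ∈ Fil l C K ↔ ∀ j, l ^ (C * (j - K)) ∣ PowerSeries.coeff j f := Iff.rfl

theorem Fil_mono {l : R} {C K K' : ℕ} (h : K ≤ K') {f : PowerSeries R} (hf : f ∈ Fil l C K) :
    f ∈ Fil l C K' := fun j =>
  (pow_dvd_pow l (Nat.mul_le_mul_left C (by omega))).trans (hf j)

theorem Fil_mul {l : R} {C K K' : ℕ} {f g : PowerSeries R} (hf : f ∈ Fil l C K)
    (hg : g ∈ Fil l C K') : f * g ∈ Fil l C (K + K') := by
  intro j
  rw [PowerSeries.coeff_mul]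
  refine dvd_sum fun x hx => ?_
  rw [HasAntidiagonal.mem_antidiagonal] at hx
  refine (pow_dvd_pow l ?_).trans ((pow_add l _ _).symm ▸ mul_dvd_mul (hf x.1) (hg x.2))
  rw [← mul_add]
  exact Nat.mul_le_mul_left C (by omega)

theorem Fil_one {l : R} {C : ℕ} (K : ℕ) : (1 : PowerSeries R) ∈ Fil l C K := by
  intro j
  rw [PowerSeries.coeff_one]
  split_ifs with h
  · simp [h]
  · simp

theorem Fil_prod {l : R} {C : ℕ} {ι : Type*} (s : Finset ι) (K : ι → ℕ) (f : ι → PowerSeries R)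
    (h : ∀ i ∈ s, f i ∈ Fil l C (K i)) : ∏ i ∈ s, f i ∈ Fil l C (∑ i ∈ s, K i) := by
  classical
  induction s using Finset.induction_on with
  | empty => simpa using Fil_one 0
  | insert a s ha ih =>
    rw [prod_insert ha, sum_insert ha]
    exact Fil_mul (h a (by simp)) (ih fun i hi => h i (by simp [hi]))

theorem Fil_det {l : R} {C : ℕ} {ι : Type*} [Fintype ι] [DecidableEq ι] (K : ι → ℕ)
    (A : Matrix ι ι (PowerSeries R)) (h : ∀ i j, A i j ∈ Fil l C (K i)) :
    A.det ∈ Fil l C (∑ i, K i) := by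
  rw [← Matrix.det_transpose, Matrix.det_apply]
  refine Submodule.sum_mem _ fun σ _ => ?_
  have : ∏ i, A.transpose (σ i) i ∈ Fil l C (∑ i, K i) :=
    Fil_prod _ K _ fun i _ => h i _
  rcases Int.units_eq_one_or (Equiv.Perm.sign σ) with hs | hs
  · rw [hs, one_smul]; exact this
  · rw [hs, Units.neg_smul, one_smul]; exact Submodule.neg_mem _ this

theorem Fil_X_mul {l : R} {C : ℕ} {a : R} (h : l ^ C ∣ a) :
    (PowerSeries.X * PowerSeries.C a : PowerSeries R) ∈ Fil l C 0 := by
  intro j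
  rw [mul_comm PowerSeries.X, PowerSeries.coeff_C_mul, PowerSeries.coeff_X]
  split_ifs with hj
  · subst hj; simpa using h
  · simp

theorem Fil_X_mul' {l : R} {C : ℕ} {a : R} :
    (PowerSeries.X * PowerSeries.C a : PowerSeries R) ∈ Fil l C 1 := by
  intro j
  rw [mul_comm PowerSeries.X, PowerSeries.coeff_C_mul, PowerSeries.coeff_X]
  split_ifs with hj
  · subst hj; simp
  · simp

/-- A quotient `E / W` of two power series in the filtration. -/
def Good (l : R) (C K : ℕ) (P : PowerSeries R) : Prop :=
  ∃ W E : PowerSeries R, PowerSeries.coeff 0 W = 1 ∧ W ∈ Fil l C K ∧ E ∈ Fil l C K ∧ W * P = E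

theorem Good.mono {l : R} {C K K' : ℕ} {P : PowerSeries R} (h : Good l C K P) (hK : K ≤ K') :
    Good l C K' P := by
  obtain ⟨W, E, h0, hW, hE, h⟩ := h
  exact ⟨W, E, h0, Fil_mono hK hW, Fil_mono hK hE, h⟩

theorem Good.add {l : R} {C K K' : ℕ} {P P' : PowerSeries R} (h : Good l C K P)
    (h' : Good l C K' P') : Good l C (K + K') (P + P') := by
  obtain ⟨W, E, h0, hW, hE, h⟩ := h
  obtain ⟨W', E', h0', hW', hE', h'⟩ := h'
  refine ⟨W * W', E * W' + W * E', ?_, Fil_mul hW hW',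
    Submodule.add_mem _ (Fil_mul hE hW') (Fil_mul hW hE'), ?_⟩
  · simp only [PowerSeries.coeff_zero_eq_constantCoeff] at h0 h0' ⊢
    rw [map_mul, h0, h0', one_mul]
  · rw [← h, ← h']; ring

theorem Good.smul {l : R} {C K : ℕ} {P : PowerSeries R} (c : R) (h : Good l C K P) :
    Good l C K (c • P) := by
  obtain ⟨W, E, h0, hW, hE, h⟩ := h
  refine ⟨W, c • E, h0, hW, Submodule.smul_mem _ _ hE, ?_⟩
  rw [mul_smul_comm, h]

theorem Good_zero {l : R} {C : ℕ} : Good l C 0 (0 : PowerSeries R) :=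
  ⟨1, 0, by simp, Fil_one 0, Submodule.zero_mem _, by simp⟩

theorem Good_sum {l : R} {C : ℕ} {ι : Type*} (s : Finset ι) (K : ι → ℕ) (P : ι → PowerSeries R)
    (h : ∀ i ∈ s, Good l C (K i) (P i)) : Good l C (∑ i ∈ s, K i) (∑ i ∈ s, P i) := by
  classical
  induction s using Finset.induction_on with
  | empty => simpa using Good_zero
  | insert a s ha ih =>
    rw [sum_insert ha, sum_insert ha]
    exact (h a (by simp)).add (ih fun i hi => h i (by simp [hi]))

/-- Divisibility of the Hankel determinants of a good power series. -/
theorem Good.hankel {l : R} {C K : ℕ} {P : PowerSeries R} (h : Good l C K P) (k : ℕ) :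
    l ^ (∑ j ∈ range k, C * (j - K)) ∣
      (Matrix.of fun i j : Fin k => PowerSeries.coeff (i + j : ℕ) P).det := by
  obtain ⟨W, E, h0, hW, hE, h⟩ := h
  set H : Matrix (Fin k) (Fin k) R := Matrix.of fun i j : Fin k => PowerSeries.coeff (i + j : ℕ) P
    with hH
  let U : Matrix (Fin k) (Fin k) R :=
    Matrix.of fun i j => if i ≤ j then PowerSeries.coeff (j - i : ℕ) W else 0
  have hU : U.det = 1 := by
    rw [Matrix.det_of_isUpperTriangular]
    · refine prod_eq_one fun i _ => ?_
      simp [U, h0]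
    · intro i j hij
      simp only [U, Matrix.of_apply]
      exact if_neg (not_le.mpr hij)
  have hcol : ∀ i j, ∃ b, (H * U) i j = l ^ (C * ((j : ℕ) - K)) * b := by
    intro i j
    change l ^ (C * ((j : ℕ) - K)) ∣ (H * U) i j
    have h1 : (H * U) i j = ∑ x ∈ range (j + 1), PowerSeries.coeff x W *
        PowerSeries.coeff (i + j - x : ℕ) P := by
      simp only [Matrix.mul_apply, hH, U, Matrix.of_apply, Fin.le_def]
      rw [Fin.sum_univ_eq_sum_range (fun x => PowerSeries.coeff (i + x : ℕ) P *
        if x ≤ (j : ℕ) then PowerSeries.coeff (j - x : ℕ) W else 0),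
        ← sum_subset (s₁ := range (j + 1)) (range_subset_range.mpr (by omega)),
        ← sum_range_reflect]
      · refine sum_congr rfl fun x hx => ?_
        rw [mem_range] at hx
        rw [if_pos (by omega), mul_comm]
        congr 3 <;> omega
      · intro x _ hx
        rw [if_neg (by simpa using hx), mul_zero]
    have h2 : PowerSeries.coeff (i + j : ℕ) E = ∑ x ∈ range (i + j + 1), PowerSeries.coeff x W *
        PowerSeries.coeff (i + j - x : ℕ) P := by
      rw [← h, PowerSeries.coeff_mul, Nat.sum_antidiagonal_eq_sum_range_succ_mk]
    rw [← sum_sdiff (s₁ := range (j + 1)) (range_subset_range.mpr (by omega)), ← h1] at h2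
    rw [eq_sub_of_add_eq' h2.symm]
    refine dvd_sub ?_ (dvd_sum fun x hx => Dvd.dvd.mul_right ?_ _)
    · exact (pow_dvd_pow l (Nat.mul_le_mul_left C (by omega))).trans (hE _)
    · refine (pow_dvd_pow l (Nat.mul_le_mul_left C ?_)).trans (hW _)
      simp at hx; omega
  choose b hb using hcol
  have h3 : H.det = (H * U).det := by rw [Matrix.det_mul, hU, mul_one]
  have h4 : H * U = Matrix.of fun i j : Fin k => l ^ (C * ((j : ℕ) - K)) * b i j := by
    ext i j; exact hb i j
  rw [h3, h4]
  have h5 := Matrix.det_mul_row (fun j : Fin k => l ^ (C * ((j : ℕ) - K))) (Matrix.of b)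
  simp only [Matrix.of_apply] at h5
  rw [h5, prod_pow_eq_pow_sum, Fin.sum_univ_eq_sum_range (fun j => C * (j - K))]
  exact dvd_mul_right _ _

/-- Generating function of traces of powers. -/
theorem Good_trace {l : R} {C K : ℕ} {ι : Type*} [Fintype ι] [DecidableEq ι]
    (B : Matrix ι ι R) (s : Finset ι) (hs : s.card ≤ K)
    (hB : ∀ u, u ∉ s → ∀ v, l ^ C ∣ B u v) :
    Good l C (K + 1) (PowerSeries.mk fun m => if m = 0 then 0 else (B ^ m).trace) := by
  classical
  let B' : Matrix ι ι (PowerSeries R) := Matrix.of fun i j => PowerSeries.X * PowerSeries.C (B i j)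
  let S : Matrix ι ι (PowerSeries R) := Matrix.of fun i j => PowerSeries.mk fun m => (B ^ m) i j
  let Kf : ι → ℕ := fun u => if u ∈ s then 1 else 0
  have hKf : ∑ u, Kf u ≤ K := by simpa [Kf] using hs
  have hB' : ∀ u v, B' u v ∈ Fil l C (Kf u) := by
    intro u v
    by_cases hu : u ∈ s
    · simp only [Kf, if_pos hu]; exact Fil_X_mul'
    · simp only [Kf, if_neg hu]; exact Fil_X_mul (hB u hu v)
  have hone : ∀ u v, (1 : Matrix ι ι (PowerSeries R)) u v ∈ Fil l C (Kf u) := by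
    intro u v
    rw [Matrix.one_apply]; split_ifs
    · exact Fil_one _
    · exact Submodule.zero_mem _
  have hM : ∀ u v, (1 - B') u v ∈ Fil l C (Kf u) := fun u v =>
    Submodule.sub_mem _ (hone u v) (hB' u v)
  have hcomp : ∀ i j m, PowerSeries.coeff m ((B' * S) i j) = if m = 0 then 0 else (B ^ m) i j := by
    intro i j m
    simp only [Matrix.mul_apply, map_sum, B', S, Matrix.of_apply, mul_assoc]
    rcases m with _ | m
    · simp
    · simp only [PowerSeries.coeff_succ_X_mul, PowerSeries.coeff_C_mul, PowerSeries.coeff_mk,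
        pow_succ', Matrix.mul_apply]
      simp
  have hS : (1 - B') * S = 1 := by
    ext i j m
    rw [sub_mul, one_mul, Matrix.sub_apply, map_sub, hcomp]
    rcases m with _ | m
    · simp only [S, Matrix.of_apply, PowerSeries.coeff_mk, pow_zero, if_pos, Matrix.one_apply]
      split_ifs <;> simp
    · simp only [S, Matrix.of_apply, PowerSeries.coeff_mk, Matrix.one_apply]
      split_ifs <;> simp_all [PowerSeries.coeff_one]
  have hadj : (1 - B').adjugate = (1 - B').det • S := by
    calc (1 - B').adjugate = (1 - B').adjugate * ((1 - B') * S) := by rw [hS, mul_one]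
      _ = _ := by rw [← mul_assoc, Matrix.adjugate_mul, Matrix.smul_mul, one_mul]
  refine ⟨(1 - B').det, (B' * (1 - B').adjugate).trace, ?_, ?_, ?_, ?_⟩
  · rw [PowerSeries.coeff_zero_eq_constantCoeff_apply, RingHom.map_det]
    have : (RingHom.mapMatrix PowerSeries.constantCoeff) (1 - B') = (1 : Matrix ι ι R) := by
      ext i j
      simp [B', Matrix.one_apply]
    rw [this, Matrix.det_one]
  · exact Fil_mono (by omega) (Fil_det Kf _ hM)
  · refine Submodule.sum_mem _ fun i _ => ?_
    rw [Matrix.diag_apply, Matrix.mul_apply]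
    refine Submodule.sum_mem _ fun j _ => ?_
    rw [mul_comm]
    refine Fil_mul (K := K) (K' := 1) ?_ ?_
    · rw [Matrix.adjugate_apply]
      refine Fil_mono hKf (Fil_det Kf _ fun u v => ?_)
      rw [Matrix.updateRow_apply]
      split_ifs
      · rw [Pi.single_apply]; split_ifs
        · exact Fil_one _
        · exact Submodule.zero_mem _
      · exact hM u v
    · exact Fil_mono (by simp only [Kf]; split_ifs <;> omega) (hB' i j)
  · rw [hadj, Matrix.mul_smul, Matrix.trace_smul, smul_eq_mul]
    congr 1
    ext m
    rw [Matrix.trace, map_sum, PowerSeries.coeff_mk]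
    simp only [Matrix.diag_apply, hcomp]
    split_ifs
    · simp
    · rfl

theorem Good_trace_mul {l : R} {C K : ℕ} {ι : Type*} [Fintype ι] [DecidableEq ι]
    (B : Matrix ι ι R) (s : Finset ι) (hs : s.card ≤ K)
    (hB : ∀ u, u ∉ s → ∀ v, l ^ C ∣ B u v) (q : R) (d : ℕ) :
    Good l C ((d + 1) * (K + 1))
      (PowerSeries.mk fun m => if m = 0 then 0 else (q ^ m - 1) ^ d * (B ^ m).trace) := by
  have h1 : (PowerSeries.mk fun m => if m = 0 then 0 else (q ^ m - 1) ^ d * (B ^ m).trace) =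
      ∑ i ∈ range (d + 1), ((-1) ^ (d - i) * (d.choose i : R)) •
        (PowerSeries.mk fun m => if m = 0 then 0 else ((q ^ i • B) ^ m).trace) := by
    ext m
    rw [map_sum, PowerSeries.coeff_mk]
    simp only [PowerSeries.coeff_smul, PowerSeries.coeff_mk]
    split_ifs with hm
    · simp
    · rw [sub_eq_add_neg, add_pow, sum_mul]
      refine sum_congr rfl fun i _ => ?_
      rw [smul_pow, Matrix.trace_smul, smul_eq_mul, smul_eq_mul, ← pow_mul, ← pow_mul, mul_comm m i]
      ring
  rw [h1]
  have h2 := Good_sum (l := l) (C := C) (range (d + 1)) (fun _ => K + 1)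
    (fun i => ((-1) ^ (d - i) * (d.choose i : R)) •
        (PowerSeries.mk fun m => if m = 0 then 0 else ((q ^ i • B) ^ m).trace)) ?_
  · simpa using h2
  · intro i _
    refine Good.smul _ (Good_trace _ s hs fun u hu v => ?_)
    rw [Matrix.smul_apply, smul_eq_mul]
    exact Dvd.dvd.mul_left (hB u hu v) _

end Fil
end DworkRat


namespace DworkRat
open Finset

theorem int_det_bound (a : ℕ → ℤ) (b : ℕ) (ha : ∀ m, |a m| ≤ (2 ^ b) ^ m) (k : ℕ) :
    |(Matrix.of fun i j : Fin k => a (i + j)).det| ≤ 2 ^ ((b + 1) * k ^ 2) := by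
  rw [Matrix.det_apply]
  refine (abs_sum_le_sum_abs _ _).trans ?_
  have h1 : ∀ σ ∈ (univ : Finset (Equiv.Perm (Fin k))),
      |Equiv.Perm.sign σ • ∏ i, (Matrix.of fun i j : Fin k => a (i + j)) (σ i) i| ≤
        2 ^ (b * k ^ 2) := by
    intro σ _
    have h2 : |∏ i : Fin k, a ((σ i : ℕ) + i)| ≤ 2 ^ (b * k ^ 2) := by
      rw [abs_prod]
      refine (prod_le_prod (fun _ _ => abs_nonneg _) fun i _ => ha _).trans ?_
      rw [prod_pow_eq_pow_sum, ← pow_mul]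
      refine pow_le_pow_right₀ (by norm_num) (Nat.mul_le_mul_left b ?_)
      rw [sum_add_distrib, Equiv.sum_comp σ (fun i : Fin k => (i : ℕ)),
        Fin.sum_univ_eq_sum_range (fun i => i)]
      have := sum_range_id_mul_two k
      rcases k with _ | k
      · simp
      · simp only [Nat.add_sub_cancel] at this
        nlinarith
    rcases Int.units_eq_one_or (Equiv.Perm.sign σ) with hs | hs
    · simpa [hs] using h2
    · simpa [hs, Units.neg_smul] using h2
  refine (sum_le_sum h1).trans ?_
  rw [sum_const, card_univ, Fintype.card_perm, Fintype.card_fin, nsmul_eq_mul, add_mul, one_mul,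
    pow_add, mul_comm]
  refine mul_le_mul_of_nonneg_left ?_ (by positivity)
  have h3 : k.factorial ≤ k ^ k := Nat.factorial_le_pow k
  have h4 : k ^ k ≤ (2 ^ k) ^ k := Nat.pow_le_pow_left (Nat.lt_two_pow_self).le k
  rw [← pow_mul, ← pow_two] at h4
  exact_mod_cast h3.trans h4

/-- The Borel-Dwork criterion, in Hankel determinant form. -/
theorem dwork_criterion {R : Type*} [CommRing R] (l : R) (p : ℕ) (hp : 2 ≤ p)
    (hint : ∀ (z : ℤ) (k : ℕ), l ^ (p * k) ∣ (z : R) → (p : ℤ) ^ k ∣ z)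
    (a : ℕ → ℤ) (B : ℕ) (ha : ∀ m, |a m| ≤ (B : ℤ) ^ m)
    (hgood : ∀ C : ℕ, ∃ K : ℕ, ∀ M : ℕ, ∃ P : PowerSeries R, Good l C K P ∧
      ∀ m, l ^ M ∣ (a m : R) - PowerSeries.coeff m P) :
    ∃ k0, ∀ k, k0 ≤ k → (Matrix.of fun i j : Fin k => a (i + j)).det = 0 := by
  obtain ⟨b, hb⟩ : ∃ b, B ≤ 2 ^ b := ⟨B, (Nat.lt_two_pow_self).le⟩
  have ha' : ∀ m, |a m| ≤ (2 ^ b : ℤ) ^ m := fun m =>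
    (ha m).trans (pow_le_pow_left₀ (by positivity) (by exact_mod_cast hb) m)
  set c := 4 * (b + 2) with hc
  obtain ⟨K, hK⟩ := hgood (p * c)
  refine ⟨4 * K + 2, fun k hk => ?_⟩
  set G := ∑ j ∈ range k, c * (j - K) with hG
  have hGk : (b + 2) * k ^ 2 ≤ G := by
    rw [hG, ← mul_sum, hc]
    have h1 : ∑ j ∈ range k, j ≤ ∑ j ∈ range k, (j - K) + k * K := by
      have : k * K = ∑ j ∈ range k, K := by simp
      rw [this, ← sum_add_distrib]
      exact sum_le_sum fun j _ => by omega
    have h2 := sum_range_id_mul_two k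
    obtain ⟨k', rfl⟩ : ∃ k', k = k' + 1 := ⟨k - 1, by omega⟩
    simp only [Nat.add_sub_cancel] at h2
    have h3 : (k' + 1) ^ 2 ≤ 4 * ∑ j ∈ range (k' + 1), (j - K) := by nlinarith
    calc (b + 2) * (k' + 1) ^ 2 ≤ (b + 2) * (4 * ∑ j ∈ range (k' + 1), (j - K)) :=
          Nat.mul_le_mul_left _ h3
      _ = _ := by ring
  obtain ⟨P, hP, hPa⟩ := hK (p * G)
  have h1 := hP.hankel k
  have h2 : ∑ j ∈ range k, p * c * (j - K) = p * G := by
    rw [hG, mul_sum]; exact sum_congr rfl fun j _ => by ring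
  rw [h2] at h1
  have h3 : l ^ (p * G) ∣ (((Matrix.of fun i j : Fin k => a (i + j)).det : ℤ) : R) := by
    let I := Ideal.span {l ^ (p * G)}
    have h4 : Ideal.Quotient.mk I (((Matrix.of fun i j : Fin k => a (i + j)).det : ℤ) : R) =
        Ideal.Quotient.mk I
          (Matrix.of fun i j : Fin k => PowerSeries.coeff (i + j : ℕ) P).det := by
      rw [← eq_intCast (Int.castRingHom R), RingHom.map_det, RingHom.map_det, RingHom.map_det]
      congr 1
      ext i j
      simp only [RingHom.mapMatrix_apply, Matrix.map_apply, Matrix.of_apply]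
      rw [Ideal.Quotient.mk_eq_mk_iff_sub_mem, Ideal.mem_span_singleton]
      exact hPa _
    rw [Ideal.Quotient.mk_eq_mk_iff_sub_mem, Ideal.mem_span_singleton] at h4
    simpa using dvd_add h4 h1
  have h5 := hint _ _ h3
  by_contra hne
  have h6 := Int.le_of_dvd (abs_pos.mpr hne) ((dvd_abs _ _).mpr h5)
  have h7 := int_det_bound a b ha' k
  have h8 : (2 : ℤ) ^ ((b + 2) * k ^ 2) ≤ (p : ℤ) ^ G :=
    calc (2 : ℤ) ^ ((b + 2) * k ^ 2) ≤ 2 ^ G := pow_le_pow_right₀ (by norm_num) hGk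
      _ ≤ (p : ℤ) ^ G := pow_le_pow_left₀ (by norm_num) (by exact_mod_cast hp) _
  have h9 := h8.trans (h6.trans h7)
  have h10 := (pow_le_pow_iff_right₀ (by norm_num : (1 : ℤ) < 2)).mp h9
  have h11 : 0 < k ^ 2 := pow_pos (by omega) 2
  nlinarith

end DworkRat


namespace DworkRat
open Finset

section LD
variable {A : Type*} [CommRing A]

/-- `f` has logarithmic derivative `L` (with respect to `X d/dX`). -/
def LD (f L : PowerSeries A) : Prop := PowerSeries.X * PowerSeries.derivative A f = f * L

theorem coeff_theta (f : PowerSeries A) (n : ℕ) :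
    PowerSeries.coeff n (PowerSeries.X * PowerSeries.derivative A f) =
      n * PowerSeries.coeff n f := by
  rcases n with _ | n
  · simp
  · rw [PowerSeries.coeff_succ_X_mul, PowerSeries.coeff_derivative]
    push_cast; ring

theorem LD_iff {f L : PowerSeries A} : LD f L ↔
    ∀ n : ℕ, (n : A) * PowerSeries.coeff n f = PowerSeries.coeff n (f * L) := by
  simp only [LD, PowerSeries.ext_iff, coeff_theta]

theorem LD_one : LD (1 : PowerSeries A) 0 := by
  simp [LD]

theorem LD.mul {f g L M : PowerSeries A} (hf : LD f L) (hg : LD g M) : LD (f * g) (L + M) := by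
  unfold LD at *
  rw [Derivation.leibniz, smul_eq_mul, smul_eq_mul, mul_add]
  calc _ = f * (PowerSeries.X * PowerSeries.derivative A g) +
      g * (PowerSeries.X * PowerSeries.derivative A f) := by ring
    _ = _ := by rw [hf, hg]; ring

theorem LD.pow {f L : PowerSeries A} (hf : LD f L) (k : ℕ) : LD (f ^ k) (k • L) := by
  induction k with
  | zero => simpa using LD_one
  | succ k ih => rw [pow_succ, succ_nsmul]; exact ih.mul hf

theorem LD_prod {ι : Type*} (s : Finset ι) {f L : ι → PowerSeries A}
    (h : ∀ i ∈ s, LD (f i) (L i)) : LD (∏ i ∈ s, f i) (∑ i ∈ s, L i) := by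
  classical
  induction s using Finset.induction_on with
  | empty => simpa using LD_one
  | insert a s ha ih =>
    rw [prod_insert ha, sum_insert ha]
    exact (h a (by simp)).mul (ih fun i hi => h i (by simp [hi]))

theorem LD.expand {f L : PowerSeries A} (hf : LD f L) (m : ℕ) (hm : m ≠ 0) :
    LD (PowerSeries.expand m hm f) (m • PowerSeries.expand m hm L) := by
  rw [LD_iff]
  intro n
  rw [mul_smul_comm, ← map_mul (PowerSeries.expand m hm), map_nsmul, PowerSeries.coeff_expand, PowerSeries.coeff_expand]
  split_ifs with h
  · obtain ⟨k, rfl⟩ := h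
    rw [Nat.mul_div_cancel_left _ (Nat.pos_of_ne_zero hm), ← LD_iff.mp hf k]
    push_cast
    rw [nsmul_eq_mul]; ring
  · simp

theorem LD.rescale {f L : PowerSeries A} (hf : LD f L) (a : A) :
    LD (PowerSeries.rescale a f) (PowerSeries.rescale a L) := by
  rw [LD_iff]
  intro n
  rw [← map_mul, PowerSeries.coeff_rescale, PowerSeries.coeff_rescale, ← LD_iff.mp hf n]
  ring

theorem LD.map {B : Type*} [CommRing B] (φ : A →+* B) {f L : PowerSeries A} (hf : LD f L) :
    LD (PowerSeries.map φ f) (PowerSeries.map φ L) := by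
  rw [LD_iff]
  intro n
  rw [← map_mul, PowerSeries.coeff_map, PowerSeries.coeff_map, ← LD_iff.mp hf n]
  simp

theorem LD_coeff {f L : PowerSeries A} (hf : LD f L) (hL : PowerSeries.coeff 0 L = 0) (n : ℕ) :
    (n : A) * PowerSeries.coeff n f =
      ∑ i ∈ range n, PowerSeries.coeff i f * PowerSeries.coeff (n - i) L := by
  rw [LD_iff.mp hf n, PowerSeries.coeff_mul, Nat.sum_antidiagonal_eq_sum_range_succ_mk,
    sum_range_succ]
  simp only [Nat.sub_self, hL, mul_zero, add_zero]

theorem LD_unique {K : Type*} [Field K] [CharZero K] {f g L : PowerSeries K} (hf : LD f L)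
    (hg : LD g L) (hL : PowerSeries.coeff 0 L = 0)
    (h0 : PowerSeries.coeff 0 f = PowerSeries.coeff 0 g) : f = g := by
  ext n
  induction n using Nat.strong_induction_on with
  | _ n ih =>
  rcases Nat.eq_zero_or_pos n with rfl | hn
  · exact h0
  · have h1 := LD_coeff hf hL n
    have h2 := LD_coeff hg hL n
    have h3 : (n : K) ≠ 0 := by exact_mod_cast hn.ne'
    refine mul_left_cancel₀ h3 ?_
    rw [h1, h2]
    exact sum_congr rfl fun i hi => by rw [ih i (mem_range.mp hi)]

/-- Solution of the logarithmic differential equation. -/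
noncomputable def ldSol {K : Type*} [Field K] (L : ℕ → K) : ℕ → K
  | 0 => 1
  | (n + 1) => ((n + 1 : ℕ) : K)⁻¹ * ∑ i : Fin (n + 1), ldSol L i * L (n + 1 - i)

theorem LD_exists {K : Type*} [Field K] [CharZero K] (L : PowerSeries K)
    (hL : PowerSeries.coeff 0 L = 0) : ∃ f, LD f L ∧ PowerSeries.coeff 0 f = 1 := by
  refine ⟨PowerSeries.mk (ldSol fun n => PowerSeries.coeff n L), ?_, by simp [ldSol]⟩
  rw [LD_iff]
  intro n
  rw [PowerSeries.coeff_mul, Nat.sum_antidiagonal_eq_sum_range_succ_mk, sum_range_succ]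
  simp only [Nat.sub_self, hL, mul_zero, add_zero, PowerSeries.coeff_mk]
  rcases n with _ | n
  · simp
  · have h3 : ((n + 1 : ℕ) : K) ≠ 0 := by exact_mod_cast Nat.succ_ne_zero n
    rw [ldSol, ← mul_assoc, mul_inv_cancel₀ h3, one_mul,
      Fin.sum_univ_eq_sum_range (fun i => ldSol (fun n => PowerSeries.coeff n L) i *
        PowerSeries.coeff (n + 1 - i) L)]

end LD

section AH
variable (p : ℕ) [hp : Fact p.Prime]

open Classical in
/-- `∑ c T^(p^j)` -/
noncomputable def Lp {A : Type*} [CommRing A] (p : ℕ) (c : A) : PowerSeries A :=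
  PowerSeries.mk fun n => if ∃ j, n = p ^ j then c else 0

theorem Lp_eq {A : Type*} [CommRing A] (c : A) :
    Lp p c = PowerSeries.C c * PowerSeries.X + PowerSeries.expand p hp.out.ne_zero (Lp p c) := by
  classical
  ext n
  rw [map_add, PowerSeries.coeff_C_mul, PowerSeries.coeff_X, PowerSeries.coeff_expand]
  simp only [Lp, PowerSeries.coeff_mk]
  have hp1 := hp.out.one_lt
  by_cases h1 : n = 1
  · subst h1
    rw [if_pos ⟨0, by simp⟩, if_pos rfl, if_neg (by simpa using hp1.ne')]
    ring
  · rw [if_neg h1]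
    by_cases hd : p ∣ n
    · obtain ⟨k, rfl⟩ := hd
      rw [if_pos (dvd_mul_right _ _), Nat.mul_div_cancel_left _ hp.out.pos]
      have : (∃ j, p * k = p ^ j) ↔ ∃ j, k = p ^ j := by
        constructor
        · rintro ⟨j, hj⟩
          rcases j with _ | j
          · exact absurd hj (by simpa using h1)
          · exact ⟨j, Nat.eq_of_mul_eq_mul_left hp.out.pos (by rw [hj, pow_succ']) ⟩
        · rintro ⟨j, rfl⟩; exact ⟨j + 1, by rw [pow_succ']⟩
      simp [this]
    · rw [if_neg hd, if_neg]
      · simp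
      · rintro ⟨j, rfl⟩
        rcases j with _ | j
        · simp at h1
        · exact hd (dvd_pow_self p (Nat.succ_ne_zero j))

theorem exists_pow_div_factorial (k : ℕ) (hk : k ≠ 0) :
    ∃ w : ℤ_[p], (p : ℚ_[p]) ^ k / (k.factorial : ℚ_[p]) = p * (w : ℚ_[p]) := by
  have h1 := padicValNat_factorial_lt_of_ne_zero p hk
  have hp0 : (p : ℚ_[p]) ≠ 0 := by exact_mod_cast hp.out.ne_zero
  have hf0 : (k.factorial : ℚ_[p]) ≠ 0 := by exact_mod_cast k.factorial_ne_zero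
  have h2 : ‖(p : ℚ_[p]) ^ (k - 1) / (k.factorial : ℚ_[p])‖ ≤ 1 := by
    rw [norm_div, norm_pow, Padic.norm_p, Padic.norm_eq_zpow_neg_valuation hf0,
      Padic.valuation_natCast, div_le_one (by have := hp.out.pos; positivity), inv_pow, ← zpow_natCast, ← zpow_neg]
    refine zpow_le_zpow_right₀ (by exact_mod_cast hp.out.one_lt.le) ?_
    omega
  refine ⟨⟨_, h2⟩, ?_⟩
  obtain ⟨k, rfl⟩ := Nat.exists_eq_succ_of_ne_zero hk
  simp only [Nat.succ_eq_add_one, Nat.add_sub_cancel, pow_succ']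
  ring

/-- Integrality of the Artin-Hasse exponential. -/
theorem artinHasse (c : ℤ_[p]) :
    ∃ F : PowerSeries ℤ_[p], PowerSeries.coeff 0 F = 1 ∧ LD F (Lp p c) := by
  classical
  set ι : ℤ_[p] →+* ℚ_[p] := PadicInt.Coe.ringHom with hι
  have hιinj : Function.Injective ι := Subtype.coe_injective
  have hp0 : (p : ℚ_[p]) ≠ 0 := by exact_mod_cast hp.out.ne_zero
  have hpn0 := hp.out.ne_zero
  have hLp0 : PowerSeries.coeff 0 (Lp p (ι c)) = 0 := by
    simp only [Lp, PowerSeries.coeff_mk]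
    rw [if_neg]
    rintro ⟨j, hj⟩
    exact pow_ne_zero j hpn0 hj.symm
  obtain ⟨E, hE, hE0⟩ := LD_exists (Lp p (ι c)) hLp0
  -- the exponential factor
  have hw : ∀ k : ℕ, ∃ w : ℤ_[p], k ≠ 0 → (p : ℚ_[p]) ^ k / (k.factorial : ℚ_[p]) = p * ι w := by
    intro k
    by_cases hk : k = 0
    · exact ⟨0, fun h => absurd hk h⟩
    · obtain ⟨w, hw⟩ := exists_pow_div_factorial p k hk
      exact ⟨w, fun _ => hw⟩
  choose w hw using hw
  let V : PowerSeries ℤ_[p] := PowerSeries.mk fun k => if k = 0 then 0 else w k * c ^ k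
  let H : PowerSeries ℚ_[p] := PowerSeries.mk fun k => (p : ℚ_[p]) ^ k * ι c ^ k / (k.factorial : ℚ_[p])
  have hHV : H = PowerSeries.map ι (1 + p * V) := by
    ext k
    rw [PowerSeries.coeff_map, map_add, PowerSeries.coeff_one, ← map_natCast (PowerSeries.C (R := ℤ_[p])),
      PowerSeries.coeff_C_mul]
    simp only [H, V, PowerSeries.coeff_mk]
    by_cases hk : k = 0
    · subst hk; simp
    · rw [if_neg hk, if_neg hk, zero_add, mul_div_right_comm, hw k hk]
      simp [mul_assoc]
  have hH : LD H (PowerSeries.C (p * ι c) * PowerSeries.X) := by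
    rw [LD_iff]
    intro n
    rw [mul_left_comm, PowerSeries.coeff_C_mul]
    rcases n with _ | n
    · simp
    · rw [PowerSeries.coeff_succ_mul_X]
      simp only [H, PowerSeries.coeff_mk, Nat.factorial_succ]
      have : (n.factorial : ℚ_[p]) ≠ 0 := by exact_mod_cast n.factorial_ne_zero
      have : ((n : ℚ_[p]) + 1) ≠ 0 := by exact_mod_cast n.succ_ne_zero
      push_cast
      field_simp
      ring
  have hfun : E ^ p = PowerSeries.expand p hpn0 E * H := by
    have h1 := hE.pow p
    have h2 := (hE.expand p hpn0).mul hH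
    have h3 : p • PowerSeries.expand p hpn0 (Lp p (ι c)) +
        PowerSeries.C (p * ι c) * PowerSeries.X = p • Lp p (ι c) := by
      conv_rhs => rw [Lp_eq]
      rw [nsmul_add, add_comm]
      congr 1
      rw [nsmul_eq_mul, map_mul, map_natCast, mul_assoc]
    rw [h3] at h2
    refine LD_unique h1 h2 (by rw [map_nsmul, hLp0, nsmul_zero]) ?_
    simp only [PowerSeries.coeff_zero_eq_constantCoeff] at hE0 ⊢
    rw [map_pow, map_mul, PowerSeries.constantCoeff_expand, hE0]
    simp [H, ← PowerSeries.coeff_zero_eq_constantCoeff_apply]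
  have key : ∀ n, ∃ z : ℤ_[p], ι z = PowerSeries.coeff n E := by
    intro n
    induction n using Nat.strong_induction_on with
    | _ n ih =>
    rcases Nat.eq_zero_or_pos n with rfl | hn
    · exact ⟨1, by rw [hE0, map_one]⟩
    have ih' : ∀ m, ∃ z : ℤ_[p], m < n → ι z = PowerSeries.coeff m E := by
      intro m
      by_cases hm : m < n
      · obtain ⟨z, hz⟩ := ih m hm; exact ⟨z, fun _ => hz⟩
      · exact ⟨0, fun h => absurd h hm⟩
    choose z hz using ih'
    let f : Polynomial ℤ_[p] := ∑ i ∈ range n, Polynomial.monomial i (z i)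
    have hfc : ∀ k, f.coeff k = if k < n then z k else 0 := by
      intro k
      simp [f, Polynomial.finsetSum_coeff, Polynomial.coeff_monomial]
    let fP : PowerSeries ℤ_[p] := (f : PowerSeries ℤ_[p])
    have hfP : ∀ k, PowerSeries.coeff k (PowerSeries.map ι fP) =
        if k < n then PowerSeries.coeff k E else 0 := by
      intro k
      simp only [fP, PowerSeries.coeff_map, Polynomial.coeff_coe, hfc]
      split_ifs with h
      · exact hz k h
      · simp
    let g : PowerSeries ℚ_[p] := PowerSeries.mk fun k => PowerSeries.coeff (n + k) E
    have hEg : E = PowerSeries.map ι fP + PowerSeries.X ^ n * g := by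
      ext k
      rw [map_add, hfP, PowerSeries.coeff_X_pow_mul']
      by_cases hk : k < n
      · rw [if_pos hk, if_neg (by omega), add_zero]
      · rw [if_neg hk, if_pos (by omega), zero_add]
        simp only [g, PowerSeries.coeff_mk]
        congr 2; omega
    have hL : PowerSeries.coeff n (E ^ p) =
        ι (PowerSeries.coeff n (fP ^ p)) + p * PowerSeries.coeff n E := by
      obtain ⟨k, hk⟩ := Polynomial.powAddExpansion (PowerSeries.map ι fP) (PowerSeries.X ^ n * g) p
      have e1 : k * (PowerSeries.X ^ n * g) ^ 2 = PowerSeries.X ^ (2 * n) * (k * g ^ 2) := by ring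
      have e2 : (p : PowerSeries ℚ_[p]) * PowerSeries.map ι fP ^ (p - 1) * (PowerSeries.X ^ n * g) =
          PowerSeries.X ^ n * (PowerSeries.C (p : ℚ_[p]) * (PowerSeries.map ι fP ^ (p - 1) * g)) := by
        rw [map_natCast]; ring
      conv_lhs => rw [hEg]
      rw [hk, e1, e2, map_add, map_add, PowerSeries.coeff_X_pow_mul', PowerSeries.coeff_X_pow_mul',
        if_pos le_rfl, if_neg (by omega), add_zero, Nat.sub_self, PowerSeries.coeff_C_mul,
        ← map_pow (PowerSeries.map ι) fP p,
        PowerSeries.coeff_map, PowerSeries.coeff_zero_eq_constantCoeff_apply,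
        map_mul PowerSeries.constantCoeff, map_pow PowerSeries.constantCoeff]
      have e3 : PowerSeries.constantCoeff (PowerSeries.map ι fP) = 1 := by
        rw [← PowerSeries.coeff_zero_eq_constantCoeff_apply, hfP, if_pos hn, hE0]
      have e4 : PowerSeries.constantCoeff g = PowerSeries.coeff n E := by
        rw [← PowerSeries.coeff_zero_eq_constantCoeff_apply]; simp [g]
      rw [e3, e4, one_pow, one_mul]
    have hR : PowerSeries.coeff n (PowerSeries.expand p hpn0 E * H) =
        ι (PowerSeries.coeff n (PowerSeries.expand p hpn0 fP * (1 + p * V))) := by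
      rw [← PowerSeries.coeff_map, map_mul (PowerSeries.map ι), PowerSeries.map_expand, ← hHV, PowerSeries.coeff_mul,
        PowerSeries.coeff_mul]
      refine sum_congr rfl fun x hx => ?_
      rw [HasAntidiagonal.mem_antidiagonal] at hx
      congr 1
      rw [PowerSeries.coeff_expand, PowerSeries.coeff_expand]
      split_ifs with hd
      · rw [hfP, if_pos]
        rcases Nat.eq_zero_or_pos x.1 with h | h
        · rw [h]; simpa using hn
        · exact (Nat.div_lt_self h hp.out.one_lt).trans_le (by omega)
      · rfl
    have hmod : ∃ y, PowerSeries.coeff n (PowerSeries.expand p hpn0 fP) -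
        PowerSeries.coeff n (fP ^ p) = p * y := by
      have e1 : PowerSeries.coeff n (PowerSeries.expand p hpn0 fP) =
          (Polynomial.expand ℤ_[p] p f).coeff n := by
        rw [PowerSeries.coeff_expand, Polynomial.coeff_expand hp.out.pos]
        simp [fP]
      have e2 : PowerSeries.coeff n (fP ^ p) = (f ^ p).coeff n := by
        simp only [fP, ← Polynomial.coe_pow, Polynomial.coeff_coe]
      rw [e1, e2, ← Polynomial.coeff_sub]
      have e3 : (Polynomial.expand ℤ_[p] p f - f ^ p).map (PadicInt.toZMod (p := p)) = 0 := by
        rw [Polynomial.map_sub, Polynomial.map_expand, Polynomial.map_pow, ZMod.expand_card,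
          sub_self]
      have e4 : PadicInt.toZMod (p := p) ((Polynomial.expand ℤ_[p] p f - f ^ p).coeff n) = 0 := by
        rw [← Polynomial.coeff_map, e3, Polynomial.coeff_zero]
      rw [← RingHom.mem_ker, PadicInt.ker_toZMod, PadicInt.maximalIdeal_eq_span_p,
        Ideal.mem_span_singleton] at e4
      exact e4
    obtain ⟨y, hy⟩ := hmod
    have hfin : (p : ℚ_[p]) * PowerSeries.coeff n E =
        p * ι (y + PowerSeries.coeff n (PowerSeries.expand p hpn0 fP * V)) := by
      have e1 : PowerSeries.coeff n (PowerSeries.expand p hpn0 fP * (1 + (p : PowerSeries ℤ_[p]) * V)) =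
          PowerSeries.coeff n (PowerSeries.expand p hpn0 fP) +
            (p : ℤ_[p]) * PowerSeries.coeff n (PowerSeries.expand p hpn0 fP * V) := by
        rw [mul_add, mul_one, map_add, mul_left_comm, ← map_natCast (PowerSeries.C (R := ℤ_[p])),
          PowerSeries.coeff_C_mul]
      have e2 := hL
      rw [hfun, hR, e1, eq_add_of_sub_eq hy] at e2
      simp only [map_add, map_mul, map_natCast] at e2 ⊢
      linear_combination -e2
    exact ⟨_, (mul_left_cancel₀ hp0 hfin).symm⟩
  choose z hz using key
  have hmap : PowerSeries.map ι (PowerSeries.mk z) = E := by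
    ext n; simp [hz]
  refine ⟨PowerSeries.mk z, ?_, ?_⟩
  · apply hιinj
    rw [PowerSeries.coeff_mk, hz, hE0, map_one]
  · rw [LD_iff]
    intro n
    apply hιinj
    have := LD_iff.mp hE n
    rw [← hmap] at this
    have hLm : Lp p (ι c) = PowerSeries.map ι (Lp p c) := by
      ext k
      simp only [Lp, PowerSeries.coeff_map, PowerSeries.coeff_mk]
      split_ifs <;> simp
    rw [hLm, ← map_mul, PowerSeries.coeff_map, PowerSeries.coeff_map] at this
    rw [← this, map_mul, map_natCast]

end AH
end DworkRat


namespace DworkRat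
open Finset

section Ev
variable {A S : Type*} [CommRing A] [CommRing S]

/-- Truncated evaluation. -/
noncomputable def evM (M : ℕ) (φ : A →+* S) (l : S) (f : PowerSeries A) : S :=
  ∑ i ∈ range M, φ (PowerSeries.coeff i f) * l ^ i

theorem evM_mul (M : ℕ) (φ : A →+* S) (l : S) (hl : l ^ M = 0) (f g : PowerSeries A) :
    evM M φ l (f * g) = evM M φ l f * evM M φ l g := by
  unfold evM
  rw [← PowerSeries.eval₂_trunc_eq_sum_range, ← PowerSeries.eval₂_trunc_eq_sum_range,
    ← PowerSeries.eval₂_trunc_eq_sum_range, ← Polynomial.eval₂_mul]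
  have h : (Polynomial.X : Polynomial A) ^ M ∣
      PowerSeries.trunc M f * PowerSeries.trunc M g - PowerSeries.trunc M (f * g) := by
    rw [Polynomial.X_pow_dvd_iff]
    intro d hd
    rw [← PowerSeries.trunc_trunc_mul_trunc, Polynomial.coeff_sub, PowerSeries.coeff_trunc,
      if_pos hd, ← Polynomial.coe_mul, Polynomial.coeff_coe, sub_self]
  obtain ⟨Q, hQ⟩ := h
  rw [eq_comm, ← sub_eq_zero, ← Polynomial.eval₂_sub, hQ, Polynomial.eval₂_mul,
    Polynomial.eval₂_X_pow, hl, zero_mul]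

theorem evM_one (M : ℕ) (φ : A →+* S) (l : S) (hM : M ≠ 0) : evM M φ l 1 = 1 := by
  unfold evM
  rw [sum_eq_single 0]
  · simp
  · intro b _ hb
    simp [PowerSeries.coeff_one, hb]
  · intro h; simp at h; exact absurd h hM

theorem evM_prod (M : ℕ) (φ : A →+* S) (l : S) (hM : M ≠ 0) (hl : l ^ M = 0) {ι : Type*}
    (s : Finset ι) (f : ι → PowerSeries A) :
    evM M φ l (∏ i ∈ s, f i) = ∏ i ∈ s, evM M φ l (f i) := by
  classical
  induction s using Finset.induction_on with
  | empty => simpa using evM_one M φ l hM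
  | insert a s ha ih => rw [prod_insert ha, prod_insert ha, evM_mul M φ l hl, ih]

theorem evM_pow (M : ℕ) (φ : A →+* S) (l : S) (hM : M ≠ 0) (hl : l ^ M = 0) 
    (f : PowerSeries A) (c : ℕ) :
    evM M φ l (f ^ c) = evM M φ l f ^ c := by
  simpa using evM_prod M φ l hM hl (range c) fun _ => f

theorem evM_geom (M : ℕ) (φ : A →+* S) (l : S) (hM : M ≠ 0) (hl : l ^ M = 0) :
    evM M φ l (PowerSeries.mk fun _ => 1) * (1 - l) = 1 := by
  unfold evM
  simp only [PowerSeries.coeff_mk, map_one, one_mul]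
  rw [geom_sum_mul_neg, hl, sub_zero]

theorem evM_expand (M : ℕ) (φ : A →+* S) (l : S) (hl : l ^ M = 0) (m : ℕ) (hm : m ≠ 0) (a : A)
    (f : PowerSeries A) :
    evM M φ l (PowerSeries.expand m hm (PowerSeries.rescale a f)) =
      ∑ i ∈ range M, φ (PowerSeries.coeff i f) * (l ^ (m - 1)) ^ i * φ a ^ i * l ^ i := by
  unfold evM
  have hl' : ∀ k, M ≤ k → l ^ k = 0 := fun k hk => by
    rw [← Nat.add_sub_cancel' hk, pow_add, hl, zero_mul]
  have e1 : ∀ i ∈ range M, φ (PowerSeries.coeff i f) * (l ^ (m - 1)) ^ i * φ a ^ i * l ^ i =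
      if m * i < M then φ (PowerSeries.coeff i f) * φ a ^ i * l ^ (m * i) else 0 := by
    intro i _
    have : l ^ (m * i) = (l ^ (m - 1)) ^ i * l ^ i := by
      obtain ⟨k, rfl⟩ := Nat.exists_eq_succ_of_ne_zero hm
      rw [Nat.succ_sub_one, ← pow_mul, ← pow_add]; congr 1; rw [Nat.succ_mul]
    split_ifs with h
    · rw [this]; ring
    · have h0 := hl' (m * i) (by omega)
      rw [this] at h0
      calc _ = φ (PowerSeries.coeff i f) * φ a ^ i * ((l ^ (m - 1)) ^ i * l ^ i) := by ring
        _ = 0 := by rw [h0, mul_zero]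
  rw [sum_congr rfl e1, ← sum_filter]
  have e2 : ∀ i ∈ range M, φ (PowerSeries.coeff i (PowerSeries.expand m hm
      (PowerSeries.rescale a f))) * l ^ i = if m ∣ i then
        φ (PowerSeries.coeff i (PowerSeries.expand m hm
      (PowerSeries.rescale a f))) * l ^ i else 0 := by
    intro i _
    split_ifs with h
    · rfl
    · rw [PowerSeries.coeff_expand, if_neg h, map_zero, zero_mul]
  rw [sum_congr rfl e2, ← sum_filter]
  symm
  refine sum_bij (fun i _ => m * i) ?_ ?_ ?_ ?_
  · intro i hi
    simp only [mem_filter, mem_range] at hi ⊢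
    exact ⟨hi.2, dvd_mul_right _ _⟩
  · intro i _ j _ h
    exact Nat.eq_of_mul_eq_mul_left (Nat.pos_of_ne_zero hm) h
  · intro i hi
    simp only [mem_filter, mem_range] at hi
    obtain ⟨k, rfl⟩ := hi.2
    have : k ≤ m * k := Nat.le_mul_of_pos_left _ (Nat.pos_of_ne_zero hm)
    exact ⟨k, by simp only [mem_filter, mem_range]; omega, rfl⟩
  · intro i _
    rw [PowerSeries.coeff_expand, if_pos (dvd_mul_right _ _),
      Nat.mul_div_cancel_left _ (Nat.pos_of_ne_zero hm), PowerSeries.coeff_rescale, map_mul φ,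
      map_pow φ]
    ring

end Ev

section Cmp
variable {A : Type*} [CommRing A] (p : ℕ) [hp : Fact p.Prime]

theorem LD_geom : LD (PowerSeries.mk fun _ => (1 : A))
    (PowerSeries.mk fun n => if n = 0 then 0 else 1) := by
  rw [LD_iff]
  intro n
  rw [PowerSeries.coeff_mul, Nat.sum_antidiagonal_eq_sum_range_succ_mk, sum_range_succ]
  simp only [PowerSeries.coeff_mk]
  rw [sum_congr rfl (g := fun _ => (1 : A))]
  · simp
  · intro x hx
    rw [if_neg (by have := mem_range.mp hx; omega), one_mul]

theorem compare_geom (hreg : ∀ x : A, (p : A) * x = 0 → x = 0)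
    (hu : ∀ n : ℕ, ¬ p ∣ n → IsUnit (n : A)) (f : PowerSeries A)
    (hf0 : PowerSeries.coeff 0 f = 1) (z : A) (M : ℕ)
    (hf : ∀ n < M, (n : A) * PowerSeries.coeff n f = z * ∑ i ∈ range n, PowerSeries.coeff i f)
    (c T : ℕ) (hz : (p : A) ^ (T + M * M) ∣ z - c) (n : ℕ) (hn : n < M) :
    (p : A) ^ T ∣ PowerSeries.coeff n f -
      PowerSeries.coeff n ((PowerSeries.mk fun _ => (1 : A)) ^ c) := by
  set g := (PowerSeries.mk fun _ => (1 : A)) ^ c with hg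
  have hg0 : PowerSeries.coeff 0 g = 1 := by
    rw [hg, PowerSeries.coeff_zero_eq_constantCoeff_apply, map_pow,
      ← PowerSeries.coeff_zero_eq_constantCoeff_apply]
    simp
  have hgr : ∀ n : ℕ, (n : A) * PowerSeries.coeff n g =
      c * ∑ i ∈ range n, PowerSeries.coeff i g := by
    intro n
    rw [LD_coeff ((LD_geom (A := A)).pow c) (by simp), mul_sum]
    refine sum_congr rfl fun i hi => ?_
    have : n - i ≠ 0 := by have := mem_range.mp hi; omega
    rw [map_nsmul, PowerSeries.coeff_mk, if_neg this, nsmul_eq_mul, mul_one, mul_comm]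
  have hreg' : ∀ (v : ℕ) (x y : A), (p : A) ^ v * x = p ^ v * y → x = y := by
    intro v
    induction v with
    | zero => intro x y h; simpa using h
    | succ v ih =>
      intro x y h
      apply ih
      rw [← sub_eq_zero]
      apply hreg
      rw [mul_sub, ← mul_assoc, ← mul_assoc, ← pow_succ', h, sub_self]
  have main : ∀ n, n < M → (p : A) ^ (T + M * (M - n)) ∣ PowerSeries.coeff n f -
      PowerSeries.coeff n g := by
    intro n
    induction n using Nat.strong_induction_on with
    | _ n ih =>
    intro hn
    rcases Nat.eq_zero_or_pos n with rfl | hpos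
    · rw [hf0, hg0, sub_self]; exact dvd_zero _
    obtain ⟨v, u, hu1, hnu⟩ := Nat.exists_eq_pow_mul_and_not_dvd hpos.ne' p hp.out.ne_one
    have hv : v < n := by
      have h1 : v < p ^ v := Nat.lt_pow_self hp.out.one_lt
      have h2 : p ^ v ≤ n := Nat.le_of_dvd hpos ⟨u, hnu⟩
      omega
    obtain ⟨w, hw⟩ := (hu u hu1).exists_right_inv
    have hbig : (p : A) ^ (T + M * (M - n) + M) ∣ (n : A) * (PowerSeries.coeff n f -
        PowerSeries.coeff n g) := by
      have e1 : (n : A) * (PowerSeries.coeff n f - PowerSeries.coeff n g) =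
          (z - c) * ∑ i ∈ range n, PowerSeries.coeff i f +
          c * ∑ i ∈ range n, (PowerSeries.coeff i f - PowerSeries.coeff i g) := by
        rw [mul_sub, hf n hn, hgr n, sum_sub_distrib]; ring
      rw [e1]
      have hle : ∀ i < n, T + M * (M - n) + M ≤ T + M * (M - i) := by
        intro i hi
        have : M - i = (M - n) + 1 + (n - i - 1) := by omega
        rw [this, mul_add, mul_add, mul_one]; omega
      refine dvd_add (Dvd.dvd.mul_right ((pow_dvd_pow _ ?_).trans hz) _)
        (Dvd.dvd.mul_left (dvd_sum fun i hi => ?_) _)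
      · simpa using hle 0 hpos
      · have hi' := mem_range.mp hi
        exact (pow_dvd_pow _ (hle i hi')).trans (ih i hi' (by omega))
    obtain ⟨y, hy⟩ := (pow_dvd_pow (p : A) (show T + M * (M - n) + v ≤ T + M * (M - n) + M by
      omega)).trans hbig
    refine ⟨w * y, hreg' v _ _ ?_⟩
    have e2 : (n : A) = (p : A) ^ v * u := by rw [hnu]; push_cast; ring
    calc (p : A) ^ v * (PowerSeries.coeff n f - PowerSeries.coeff n g)
        = w * (p ^ v * u * (PowerSeries.coeff n f - PowerSeries.coeff n g)) := by
          linear_combination (-(p : A) ^ v * (PowerSeries.coeff n f - PowerSeries.coeff n g)) * hw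
      _ = _ := by rw [← e2, hy, pow_add]; ring
  exact (pow_dvd_pow _ (by omega)).trans (main n hn)

end Cmp
end DworkRat


namespace DworkRat
open Finset

section Split
variable {A R : Type*} [CommRing A] [CommRing R] (p : ℕ) [hp : Fact p.Prime]

/-- Product of expanded Artin-Hasse series. -/
noncomputable def Gser (M : ℕ) (F : ℕ → PowerSeries A) (a : A) : PowerSeries A :=
  ∏ k ∈ (range M).filter (fun k => ¬ p ∣ k + 1),
    PowerSeries.expand (k + 1) k.succ_ne_zero (PowerSeries.rescale a (F k))

theorem Gser_spec (M : ℕ) (F : ℕ → PowerSeries A) (b : ℕ → A)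
    (hF0 : ∀ k, PowerSeries.coeff 0 (F k) = 1)
    (hF : ∀ k, ¬ p ∣ k + 1 → LD (F k) (Lp p (b k)))
    (hb : ∀ k, ¬ p ∣ k + 1 → ((k + 1 : ℕ) : A) * b k = 1) (a : A) :
    PowerSeries.coeff 0 (Gser p M F a) = 1 ∧
    ∃ L, LD (Gser p M F a) L ∧ PowerSeries.coeff 0 L = 0 ∧
      ∀ N, 1 ≤ N → N < M → PowerSeries.coeff N L = a ^ (p ^ padicValNat p N) := by
  constructor
  · rw [Gser, PowerSeries.coeff_zero_eq_constantCoeff_apply, map_prod]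
    refine prod_eq_one fun k _ => ?_
    rw [PowerSeries.constantCoeff_expand, ← PowerSeries.coeff_zero_eq_constantCoeff_apply,
      PowerSeries.coeff_rescale, hF0]
    simp
  refine ⟨_, LD_prod _ fun k hk => ((hF k (mem_filter.mp hk).2).rescale a).expand (k + 1)
    k.succ_ne_zero, ?_, ?_⟩
  · rw [map_sum]
    refine sum_eq_zero fun k _ => ?_
    rw [map_nsmul, PowerSeries.coeff_expand, if_pos (dvd_zero _), PowerSeries.coeff_rescale]
    simp only [Lp, PowerSeries.coeff_mk, Nat.zero_div]
    rw [if_neg]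
    · simp
    · rintro ⟨j, hj⟩
      exact pow_ne_zero j hp.out.ne_zero hj.symm
  · intro N hN1 hNM
    obtain ⟨v, u, hu1, hnu⟩ := Nat.exists_eq_pow_mul_and_not_dvd (by omega : N ≠ 0) p
      hp.out.ne_one
    have huniq : ∀ j m, N = p ^ j * m → ¬ p ∣ m → padicValNat p N = j := by
      intro j m h hm
      have hm0 : m ≠ 0 := by rintro rfl; simp at hm
      rw [h, padicValNat.mul (pow_ne_zero _ hp.out.ne_zero) hm0, padicValNat.prime_pow,
        padicValNat.eq_zero_of_not_dvd hm, add_zero]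
    have hv : padicValNat p N = v := huniq v u hnu hu1
    have hu0 : u ≠ 0 := by rintro rfl; simp at hu1
    obtain ⟨k, rfl⟩ := Nat.exists_eq_succ_of_ne_zero hu0
    rw [map_sum, sum_eq_single k]
    · rw [map_nsmul, PowerSeries.coeff_expand, if_pos ⟨p ^ v, by rw [hnu, mul_comm]⟩,
        PowerSeries.coeff_rescale, hv]
      have e : N / (k + 1) = p ^ v := by
        rw [hnu]; exact Nat.mul_div_cancel _ k.succ_pos
      rw [e]
      simp only [Lp, PowerSeries.coeff_mk]
      rw [if_pos ⟨v, rfl⟩, nsmul_eq_mul, mul_left_comm, hb k hu1, mul_one]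
    · intro i hi hik
      rw [map_nsmul, PowerSeries.coeff_expand]
      split_ifs with hd
      · rw [PowerSeries.coeff_rescale]
        simp only [Lp, PowerSeries.coeff_mk]
        rw [if_neg]
        · simp
        · rintro ⟨j, hj⟩
          apply hik
          have h1 : N = p ^ j * (i + 1) := by rw [← hj, Nat.div_mul_cancel hd]
          have h2 := huniq j _ h1 (mem_filter.mp hi).2
          rw [hv] at h2
          subst h2
          rw [h1] at hnu
          have := Nat.eq_of_mul_eq_mul_left (pow_pos hp.out.pos v) hnu
          omega
      · simp
    · intro h
      exfalso
      apply h
      rw [mem_filter, mem_range]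
      refine ⟨?_, hu1⟩
      have : k + 1 ≤ N := Nat.le_of_dvd hN1 ⟨p ^ v, by rw [hnu, mul_comm]⟩
      omega

theorem exists_F (ψ : ℤ_[p] →+* A) : ∃ (F : ℕ → PowerSeries A) (b : ℕ → A),
    (∀ k, PowerSeries.coeff 0 (F k) = 1) ∧
    (∀ k, ¬ p ∣ k + 1 → LD (F k) (Lp p (b k))) ∧
    (∀ k, ¬ p ∣ k + 1 → ((k + 1 : ℕ) : A) * b k = 1) := by
  have : ∀ k : ℕ, ∃ (F : PowerSeries A) (b : A), PowerSeries.coeff 0 F = 1 ∧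
      (¬ p ∣ k + 1 → LD F (Lp p b)) ∧ (¬ p ∣ k + 1 → ((k + 1 : ℕ) : A) * b = 1) := by
    intro k
    by_cases hk : p ∣ k + 1
    · exact ⟨1, 0, by simp, fun h => absurd hk h, fun h => absurd hk h⟩
    · have hun : IsUnit ((k + 1 : ℕ) : ℤ_[p]) := by
        rw [PadicInt.isUnit_iff]
        by_contra hne
        have h1 := lt_of_le_of_ne (PadicInt.norm_le_one _) hne
        have h2 := (PadicInt.norm_int_lt_one_iff_dvd (p := p) ((k + 1 : ℕ) : ℤ)).mp
          (by simpa using h1)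
        exact hk (by exact_mod_cast h2)
      obtain ⟨c, hc⟩ := hun.exists_right_inv
      obtain ⟨F, hF0, hF⟩ := artinHasse p c
      refine ⟨PowerSeries.map ψ F, ψ c, ?_, fun _ => ?_, fun _ => ?_⟩
      · rw [PowerSeries.coeff_map, hF0, map_one]
      · have := hF.map ψ
        convert this using 1
        ext n
        simp only [Lp, PowerSeries.coeff_map, PowerSeries.coeff_mk]
        split_ifs <;> simp
      · rw [← map_natCast ψ, ← map_mul, hc, map_one]
  choose F b h1 h2 h3 using this
  exact ⟨F, b, h1, h2, h3⟩

theorem split_core (φ : A →+* R) (hreg : ∀ x : A, (p : A) * x = 0 → x = 0)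
    (hu : ∀ n : ℕ, ¬ p ∣ n → IsUnit (n : A)) (ψ : ℤ_[p] →+* A) (l η : R)
    (hη : (1 - l) * η = 1) (hlp : l ∣ (p : R)) (M : ℕ) :
    ∃ θ : ℕ → R, (∀ n, l ^ n ∣ θ n) ∧ ∀ (s : ℕ) (a : ℕ → A) (z : A) (c : ℕ),
      (∀ v : ℕ, ∑ i ∈ range s, a i ^ (p ^ v) = z) → (p : A) ^ (M + M * M) ∣ z - c →
      l ^ M ∣ η ^ c - ∏ i ∈ range s, ∑ n ∈ range M, θ n * φ (a i) ^ n := by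
  rcases Nat.eq_zero_or_pos M with rfl | hM
  · exact ⟨0, by simp, by simp⟩
  obtain ⟨F, b, hF0, hF, hb⟩ := exists_F (A := A) p ψ
  let Θ : PowerSeries R := ∏ k ∈ (range M).filter (fun k => ¬ p ∣ k + 1),
    PowerSeries.rescale (l ^ k) (PowerSeries.map φ (F k))
  refine ⟨fun n => PowerSeries.coeff n Θ * l ^ n, fun n => dvd_mul_left _ _, ?_⟩
  intro s a z c hz hc
  let π := Ideal.Quotient.mk (Ideal.span {l ^ M})
  have hl : (π l) ^ M = 0 := by
    rw [← map_pow, Ideal.Quotient.eq_zero_iff_mem]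
    exact Ideal.mem_span_singleton_self _
  rw [← Ideal.mem_span_singleton, ← Ideal.Quotient.eq_zero_iff_mem, map_sub, sub_eq_zero]
  change π _ = π _
  set f : PowerSeries A := ∏ i ∈ range s, Gser p M F (a i) with hf
  -- the product side
  have e1 : π (∏ i ∈ range s, ∑ n ∈ range M, PowerSeries.coeff n Θ * l ^ n * φ (a i) ^ n) =
      evM M (π.comp φ) (π l) f := by
    rw [hf, evM_prod _ _ _ hM.ne' hl, map_prod]
    refine prod_congr rfl fun i _ => ?_
    have e2 : π (∑ n ∈ range M, PowerSeries.coeff n Θ * l ^ n * φ (a i) ^ n) =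
        evM M π (π l) (PowerSeries.rescale (φ (a i)) Θ) := by
      rw [evM, map_sum]
      refine sum_congr rfl fun n _ => ?_
      rw [PowerSeries.coeff_rescale]
      simp only [map_mul, map_pow]
      ring
    rw [e2]
    simp only [Θ]
    rw [map_prod, evM_prod _ _ _ hM.ne' hl, Gser, evM_prod _ _ _ hM.ne' hl]
    refine prod_congr rfl fun k _ => ?_
    rw [evM_expand _ _ _ hl, evM]
    refine sum_congr rfl fun n _ => ?_
    rw [PowerSeries.coeff_rescale, PowerSeries.coeff_rescale, PowerSeries.coeff_map]
    simp only [map_mul, map_pow, RingHom.comp_apply, Nat.add_sub_cancel]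
    ring
  rw [e1]
  have hLd : ∀ i, ∃ L, LD (Gser p M F (a i)) L ∧ PowerSeries.coeff 0 L = 0 ∧
      ∀ N, 1 ≤ N → N < M → PowerSeries.coeff N L = a i ^ (p ^ padicValNat p N) :=
    fun i => (Gser_spec p M F b hF0 hF hb (a i)).2
  choose L hL1 hL2 hL3 using hLd
  have hfL : LD f (∑ i ∈ range s, L i) := LD_prod _ fun i _ => hL1 i
  have hcmp := compare_geom p hreg hu f (by
      rw [hf, PowerSeries.coeff_zero_eq_constantCoeff_apply, map_prod]
      refine prod_eq_one fun k _ => ?_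
      rw [← PowerSeries.coeff_zero_eq_constantCoeff_apply]
      exact (Gser_spec p M F b hF0 hF hb (a k)).1) z M (by
      intro n hn
      rw [LD_coeff hfL (by rw [map_sum]; exact sum_eq_zero fun i _ => hL2 i), mul_sum]
      refine sum_congr rfl fun i hi => ?_
      have hi' := mem_range.mp hi
      rw [mul_comm, map_sum]
      congr 1
      rw [← hz (padicValNat p (n - i))]
      exact sum_congr rfl fun j _ => hL3 j _ (by omega) (by omega)) c M hc
  have e3 : evM M (π.comp φ) (π l) f =
      evM M (π.comp φ) (π l) ((PowerSeries.mk fun _ => (1 : A)) ^ c) := by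
    unfold evM
    refine sum_congr rfl fun n hn => ?_
    congr 1
    rw [← sub_eq_zero, ← map_sub]
    obtain ⟨y, hy⟩ := hcmp n (mem_range.mp hn)
    obtain ⟨w, hw⟩ := hlp
    have : π (p : R) ^ M = 0 := by rw [hw, map_mul, mul_pow, hl, zero_mul]
    rw [hy, map_mul, map_pow, RingHom.comp_apply, map_natCast φ, this, zero_mul]
  rw [e3, evM_pow _ _ _ hM.ne' hl, map_pow]
  congr 1
  have h1 := evM_geom M (π.comp φ) (π l) hM.ne' hl
  have h2 : (1 - π l) * π η = 1 := by rw [← map_one π, ← map_sub, ← map_mul, hη]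
  calc π η = evM M (π.comp φ) (π l) (PowerSeries.mk fun _ => 1) * (1 - π l) * π η := by
        rw [h1, one_mul]
    _ = _ := by rw [mul_assoc, h2, mul_one]

end Split
end DworkRat


namespace DworkRat
open Finset

section Witt
variable (p : ℕ) [hp : Fact p.Prime] (k : Type*) [Field k] [CharP k p] [PerfectRing k p]

theorem witt_charZero_reg (x : WittVector p k) (h : (p : WittVector p k) * x = 0) : x = 0 := by
  rcases mul_eq_zero.mp h with h | h
  · exact absurd h (WittVector.p_nonzero p k)
  · exact h

theorem witt_dvd_of_coeff (x : WittVector p k) (h : x.coeff 0 = 0) :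
    (p : WittVector p k) ∣ x := by
  by_cases hx : x = 0
  · rw [hx]; exact dvd_zero _
  obtain ⟨m, b, hb, rfl⟩ := WittVector.exists_eq_pow_p_mul x hx
  rcases m with _ | m
  · simp at h; exact absurd h hb
  · exact Dvd.dvd.mul_right (dvd_pow_self _ m.succ_ne_zero) _

theorem witt_cc (x : WittVector p k) : WittVector.constantCoeff x = x.coeff 0 := rfl

theorem witt_coeff_natCast (n : ℕ) : (n : WittVector p k).coeff 0 = n :=
  map_natCast (WittVector.constantCoeff (p := p) (R := k)) n

theorem witt_coeff_intCast (n : ℤ) : (n : WittVector p k).coeff 0 = n :=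
  map_intCast (WittVector.constantCoeff (p := p) (R := k)) n

theorem witt_unit (n : ℕ) (h : ¬ p ∣ n) : IsUnit (n : WittVector p k) := by
  apply WittVector.isUnit_of_coeff_zero_ne_zero
  rw [witt_coeff_natCast]
  intro h0
  exact h ((CharP.cast_eq_zero_iff k p n).mp h0)

theorem witt_int_dvd (z : ℤ) (j : ℕ) (h : (p : WittVector p k) ^ j ∣ z) : (p : ℤ) ^ j ∣ z := by
  induction j generalizing z with
  | zero => simp
  | succ j ih =>
    obtain ⟨y, hy⟩ := h
    have h1 : (p : ℤ) ∣ z := by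
      rw [← CharP.intCast_eq_zero_iff k p, ← witt_coeff_intCast p k, hy]
      rw [← witt_cc, pow_succ', map_mul, map_mul, map_natCast, CharP.cast_eq_zero]
      simp
    obtain ⟨w, rfl⟩ := h1
    rw [pow_succ']
    apply mul_dvd_mul_left
    apply ih
    refine ⟨y, ?_⟩
    rw [← sub_eq_zero]
    apply witt_charZero_reg p k
    push_cast at hy
    rw [mul_sub, hy, pow_succ']; ring

/-- A Frobenius-fixed Witt vector is approximated by natural numbers. -/
theorem witt_fixed_approx (z : WittVector p k) (hz : WittVector.frobenius z = z) (K : ℕ) :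
    ∃ c : ℕ, (p : WittVector p k) ^ K ∣ z - c := by
  induction K generalizing z with
  | zero => exact ⟨0, by simp⟩
  | succ K ih =>
    have h0 : z.coeff 0 ^ p = z.coeff 0 := by
      rw [← WittVector.coeff_frobenius_charP, hz]
    obtain ⟨c0, hc0⟩ : ∃ c0 : ℕ, z.coeff 0 = (c0 : k) := by
      obtain ⟨y, hy⟩ := (mem_bot_iff_intCast p k).mp
        ((Subfield.mem_bot_iff_pow_eq_self k p).mpr h0)
      refine ⟨(y % p).toNat, ?_⟩
      have h1 : (((y % p).toNat : ℤ) : k) = (y : k) := by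
        rw [Int.toNat_of_nonneg (Int.emod_nonneg _ (by exact_mod_cast hp.out.ne_zero)),
          CharP.intCast_eq_intCast k p]
        exact Int.mod_modEq _ _
      rw [← hy, ← h1, Int.cast_natCast]
    obtain ⟨y, hy⟩ := witt_dvd_of_coeff p k (z - c0) (by
      rw [← witt_cc, map_sub, map_natCast, witt_cc, hc0, sub_self])
    have hyf : WittVector.frobenius y = y := by
      have h1 := congrArg WittVector.frobenius hy
      rw [map_sub, hz, map_natCast, hy, map_mul, map_natCast] at h1
      rw [eq_comm, ← sub_eq_zero]
      apply witt_charZero_reg p k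
      rw [mul_sub, h1, sub_self]
    obtain ⟨c, hc⟩ := ih y hyf
    refine ⟨c0 + p * c, ?_⟩
    have : z - ((c0 + p * c : ℕ) : WittVector p k) = p * (y - c) := by
      push_cast
      linear_combination hy
    rw [this, pow_succ']
    exact mul_dvd_mul_left _ hc

end Witt

/-- The data needed from a `p`-adic coefficient ring. -/
structure SplitData (p : ℕ) [Fact p.Prime] (R : Type*) [CommRing R] where
  l : R
  η : R
  τ : AlgebraicClosure (ZMod p) →* R
  hint : ∀ (z : ℤ) (k : ℕ), l ^ (p * k) ∣ (z : R) → (p : ℤ) ^ k ∣ z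
  l_reg : ∀ x, l * x = 0 → x = 0
  η_pow : η ^ p = 1
  η_fix : ∀ x, η * x = x → x = 0
  τ_zero : τ 0 = 0
  τ_unit : ∀ x y, x ≠ y → IsUnit (τ x - τ y)
  split : ∀ M : ℕ, ∃ θ : ℕ → R, (∀ n, l ^ n ∣ θ n) ∧
    ∀ (s : ℕ) (x : AlgebraicClosure (ZMod p)), x ^ (p ^ s) = x → ∀ c : ℕ,
      (c : AlgebraicClosure (ZMod p)) = ∑ i ∈ range s, x ^ (p ^ i) →
      l ^ M ∣ η ^ c - ∏ i ∈ range s, ∑ n ∈ range M, θ n * τ x ^ (p ^ i * n)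

section Cons
variable (p : ℕ) [hp : Fact p.Prime]

theorem cyclo_facts {W : Type} [CommRing W] [IsDomain W] (hW : ∀ x : W, (p : W) * x = 0 → x = 0) :
    ∃ (R : Type) (_ : CommRing R) (φ : W →+* R) (u : R),
      (∀ x : R, (p : R) * x = 0 → x = 0) ∧ (∑ i ∈ range p, u ^ i = 0) ∧
      (∀ (w : W) (k : ℕ), (p : R) ^ k ∣ φ w → (p : W) ^ k ∣ w) := by
  let g := Polynomial.cyclotomic p W
  have hg : g.Monic := Polynomial.cyclotomic.monic p W
  have hpow : ∀ (k : ℕ) (x : AdjoinRoot g),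
      AdjoinRoot.modByMonicHom hg ((p : AdjoinRoot g) ^ k * x) =
        (p : W) ^ k • AdjoinRoot.modByMonicHom hg x := by
    intro k x
    rw [← map_smul, Algebra.smul_def]
    simp
  refine ⟨AdjoinRoot g, inferInstance, AdjoinRoot.of g, AdjoinRoot.root g, ?_, ?_, ?_⟩
  · intro x hx
    have h1 := hpow 1 x
    rw [pow_one, pow_one, hx, map_zero] at h1
    have h2 : AdjoinRoot.modByMonicHom hg x = 0 := by
      ext n
      have := congrArg (fun q => Polynomial.coeff q n) h1
      simp only [Polynomial.coeff_zero, Polynomial.coeff_smul, smul_eq_mul] at this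
      rw [hW _ this.symm, Polynomial.coeff_zero]
    rw [← AdjoinRoot.mk_leftInverse hg x, h2, map_zero]
  · have h1 := AdjoinRoot.eval₂_root g
    simp only [g] at h1
    have h2 : Polynomial.eval₂ (AdjoinRoot.of g) (AdjoinRoot.root g)
        (∑ i ∈ range p, Polynomial.X ^ i) = 0 := by
      rw [← Polynomial.cyclotomic_prime]; exact h1
    rw [Polynomial.eval₂_finsetSum] at h2
    simpa using h2
  · rintro w k ⟨y, hy⟩
    have h1 := hpow k y
    rw [← hy, ← AdjoinRoot.mk_C, AdjoinRoot.modByMonicHom_mk] at h1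
    have hdeg : (Polynomial.C w).degree < g.degree := by
      refine lt_of_le_of_lt Polynomial.degree_C_le ?_
      rw [Polynomial.degree_cyclotomic, Nat.totient_prime hp.out]
      exact_mod_cast Nat.sub_pos_of_lt hp.out.one_lt
    rw [(Polynomial.modByMonic_eq_self_iff hg).mpr hdeg] at h1
    have := congrArg (fun q => Polynomial.coeff q 0) h1
    simp only [Polynomial.coeff_C_zero, Polynomial.coeff_smul, smul_eq_mul] at this
    exact ⟨_, this⟩

theorem exists_splitData : ∃ (R : Type) (_ : CommRing R), Nonempty (SplitData p R) := by
  let Ω := AlgebraicClosure (ZMod p)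
  have : CharP Ω p := charP_of_injective_algebraMap (algebraMap (ZMod p) Ω).injective p
  let W := WittVector p Ω
  obtain ⟨R, _, φ, u, htf, hu, hdvd⟩ := cyclo_facts p (W := W) (witt_charZero_reg p Ω)
  have hup : u ^ p = 1 := by
    have := geom_sum_mul u p
    rw [hu, zero_mul] at this
    exact (sub_eq_zero.mp this.symm)
  have huη : u * u ^ (p - 1) = 1 := by
    rw [← pow_succ', Nat.sub_add_cancel hp.out.one_lt.le, hup]
  have hlp : (1 - u) ∣ (p : R) := by
    have : (p : R) = ∑ i ∈ range p, (1 - u ^ i) := by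
      rw [sum_sub_distrib, hu]; simp
    rw [this]
    refine dvd_sum fun i _ => ?_
    simpa using sub_dvd_pow_sub_pow (1 : R) u i
  have hpl : (p : R) ∣ (1 - u) ^ p := by
    obtain ⟨r, hr⟩ := exists_add_pow_prime_eq hp.out (1 - u) u
    rw [sub_add_cancel, one_pow, hup] at hr
    exact ⟨-((1 - u) * u * r), by linear_combination -hr⟩
  let ψ : ℤ_[p] →+* W := (WittVector.map (algebraMap (ZMod p) Ω)).comp
    (WittVector.equiv p).symm.toRingHom
  refine ⟨R, inferInstance, ⟨{
    l := 1 - u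
    η := u ^ (p - 1)
    τ := (φ : W →* R).comp (WittVector.teichmuller p)
    hint := ?_
    l_reg := ?_
    η_pow := ?_
    η_fix := ?_
    τ_zero := ?_
    τ_unit := ?_
    split := ?_ }⟩⟩
  · intro z k h
    apply witt_int_dvd p Ω
    apply hdvd
    rw [map_intCast]
    refine dvd_trans ?_ h
    rw [pow_mul]
    exact pow_dvd_pow_of_dvd hpl k
  · intro x hx
    obtain ⟨w, hw⟩ := hlp
    apply htf
    rw [hw, mul_comm _ w, mul_assoc, hx, mul_zero]
  · rw [← pow_mul, mul_comm, pow_mul, hup, one_pow]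
  · intro x hx
    have h1 : u * x = x := by
      conv_lhs => rw [← hx, ← mul_assoc, huη, one_mul]
    have h2 : ∀ i : ℕ, u ^ i * x = x := by
      intro i
      induction i with
      | zero => simp
      | succ i ih => rw [pow_succ, mul_assoc, h1, ih]
    apply htf
    have : (∑ i ∈ range p, u ^ i) * x = p * x := by
      rw [sum_mul, sum_congr rfl fun i _ => h2 i]; simp
    rw [← this, hu, zero_mul]
  · change φ ((WittVector.teichmuller p) 0) = 0
    rw [WittVector.teichmuller_zero, map_zero]
  · intro x y hxy
    have h1 : IsUnit (WittVector.teichmuller p x - WittVector.teichmuller p y) := by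
      apply WittVector.isUnit_of_coeff_zero_ne_zero
      rw [← witt_cc, map_sub, witt_cc, witt_cc, WittVector.teichmuller_coeff_zero, WittVector.teichmuller_coeff_zero]
      exact sub_ne_zero.mpr hxy
    have h2 := h1.map φ
    rwa [map_sub] at h2
  · intro M
    obtain ⟨θ, hθ, hs⟩ := split_core p φ (witt_charZero_reg p Ω) (witt_unit p Ω) ψ (1 - u)
      (u ^ (p - 1)) (by rw [sub_sub_cancel, huη]) hlp M
    refine ⟨θ, hθ, ?_⟩
    intro s x hx c hc
    let t : W := WittVector.teichmuller p x
    have hfrob : ∀ y : Ω, WittVector.frobenius (WittVector.teichmuller p y) =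
        WittVector.teichmuller p y ^ p := by
      intro y
      rw [WittVector.frobenius_eq_map_frobenius, WittVector.map_teichmuller, ← map_pow]
      rfl
    have hts : t ^ (p ^ s) = t := by simp only [t, ← map_pow]; rw [hx]
    let z : W := ∑ i ∈ range s, t ^ (p ^ i)
    have hzf : ∑ i ∈ range s, (t ^ (p ^ i)) ^ p = z := by
      have e1 : ∀ i, (t ^ (p ^ i)) ^ p = t ^ (p ^ (i + 1)) := fun i => by
        rw [← pow_mul, pow_succ]
      simp only [e1]
      have e2 := sum_range_succ (fun i => t ^ p ^ i) s
      rw [sum_range_succ'] at e2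
      simp only [hts, pow_zero, pow_one] at e2
      exact add_right_cancel e2
    have hzfrob : WittVector.frobenius z = z := by
      conv_rhs => rw [← hzf]
      simp only [z, map_sum]
      refine sum_congr rfl fun i _ => ?_
      rw [map_pow, hfrob, ← pow_mul, ← pow_mul, mul_comm]
    have hzv : ∀ v : ℕ, ∑ i ∈ range s, (t ^ (p ^ i)) ^ (p ^ v) = z := by
      intro v
      induction v with
      | zero => simp [z]
      | succ v ih =>
        rw [← hzfrob, ← ih, map_sum]
        refine sum_congr rfl fun i _ => ?_
        rw [map_pow, map_pow, hfrob, ← pow_mul, ← pow_mul, ← pow_mul]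
        change t ^ _ = t ^ _
        congr 1; ring
    obtain ⟨c', hc'⟩ := witt_fixed_approx p Ω z hzfrob (M + M * M + 1)
    have h1 := hs s (fun i => t ^ (p ^ i)) z c' hzv ((pow_dvd_pow _ (Nat.le_succ _)).trans hc')
    have hcc : (c : Ω) = c' := by
      obtain ⟨y, hy⟩ := hc'
      have h2 := congrArg (WittVector.constantCoeff (p := p) (R := Ω)) hy
      rw [map_sub, map_natCast, map_mul, pow_succ, map_mul, map_natCast, CharP.cast_eq_zero Ω p,
        mul_zero, zero_mul, sub_eq_zero] at h2
      rw [hc, ← h2]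
      simp only [z, map_sum, map_pow]
      refine sum_congr rfl fun i _ => ?_
      change _ = ((WittVector.teichmuller p x).coeff 0) ^ (p ^ i)
      rw [WittVector.teichmuller_coeff_zero]
    have hmod : c ≡ c' [MOD p] := (CharP.natCast_eq_natCast Ω p).mp hcc
    have hpow : (u ^ (p - 1)) ^ c = (u ^ (p - 1)) ^ c' := by
      have hq : (u ^ (p - 1)) ^ p = 1 := by rw [← pow_mul, mul_comm, pow_mul, hup, one_pow]
      exact pow_eq_pow_of_modEq hmod hq
    rw [hpow]
    have hτ : ∀ i n : ℕ, ((φ : W →* R).comp (WittVector.teichmuller p)) x ^ (p ^ i * n) =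
        φ (t ^ (p ^ i)) ^ n := by
      intro i n
      rw [map_pow, ← pow_mul]; rfl
    simp only [hτ]
    exact h1

end Cons
end DworkRat


namespace DworkRat
open Finset

section Trace
variable {R : Type*} [CommRing R] {σ T : Type*} [Fintype σ] [DecidableEq σ] [Fintype T]

/-- Box of exponents. -/
def box (S : Finset σ) (D : ℕ) : Finset (σ → ℕ) :=
  Fintype.piFinset fun i => if i ∈ S then range (D + 1) else {0}

theorem mem_box {S : Finset σ} {D : ℕ} {u : σ → ℕ} :
    u ∈ box S D ↔ (∀ i, u i ≤ D) ∧ ∀ i ∉ S, u i = 0 := by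
  simp only [box, Fintype.mem_piFinset]
  constructor
  · intro h
    refine ⟨fun i => ?_, fun i hi => ?_⟩
    · have := h i
      split_ifs at this
      · have := mem_range.mp this; omega
      · rw [mem_singleton] at this; omega
    · have := h i
      rw [if_neg hi] at this
      exact mem_singleton.mp this
  · rintro ⟨h1, h2⟩ i
    split_ifs with hi
    · have := h1 i; exact mem_range.mpr (by omega)
    · exact mem_singleton.mpr (h2 i hi)

/-- Dwork's matrix. -/
def dwMat (q : ℕ) (b : T → R) (a : T → σ → ℕ) (S : Finset σ) (D : ℕ) :
    Matrix (box S D) (box S D) R :=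
  Matrix.of fun u v => ∑ κ, if (∀ i, a κ i + v.1 i = q * u.1 i) then b κ else 0

theorem dwMat_apply (q : ℕ) (b : T → R) (a : T → σ → ℕ) (S : Finset σ) (D : ℕ) (u v : box S D) :
    dwMat q b a S D u v = ∑ κ, if (∀ i, a κ i + v.1 i = q * u.1 i) then b κ else 0 := rfl

theorem dwMat_pow (q : ℕ) (hq : 2 ≤ q) (b : T → R) (a : T → σ → ℕ) (S : Finset σ) (D : ℕ)
    (hD : ∀ κ i, a κ i ≤ D) (m : ℕ) (u v : box S D) :
    (dwMat q b a S D ^ m) u v = ∑ κ : Fin m → T,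
      if (∀ i, ∑ j : Fin m, q ^ (j : ℕ) * a (κ j) i + v.1 i = q ^ m * u.1 i) then ∏ j, b (κ j)
        else 0 := by
  induction m generalizing v with
  | zero =>
    simp only [pow_zero, Matrix.one_apply, univ_eq_empty, sum_empty, prod_empty, zero_add, one_mul,
      sum_const, card_univ, Fintype.card_pi, one_smul]
    have : u = v ↔ ∀ i, v.1 i = u.1 i := by
      rw [Subtype.ext_iff, funext_iff]
      exact forall_congr' fun i => eq_comm
    simp only [this]
  | succ m ih =>
    rw [pow_succ, Matrix.mul_apply]
    simp_rw [ih, dwMat_apply]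
    rw [← Fintype.sum_equiv (Fin.consEquiv fun _ => T)
      (fun κ => if (∀ i, ∑ j : Fin (m + 1), q ^ (j : ℕ) * a ((Fin.cons κ.1 κ.2 : Fin (m + 1) → T) j) i
        + v.1 i = q ^ (m + 1) * u.1 i) then
          ∏ j : Fin (m + 1), b ((Fin.cons κ.1 κ.2 : Fin (m + 1) → T) j) else 0) _ (fun κ => rfl),
      Fintype.sum_prod_type]
    simp only [Fin.sum_univ_succ, Fin.prod_univ_succ, Fin.cons_zero, Fin.cons_succ, Fin.val_zero,
      pow_zero, one_mul, Fin.val_succ]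
    simp only [sum_mul_sum]
    rw [sum_comm, sum_comm (s := (univ : Finset T))]
    refine sum_congr rfl fun κ' _ => ?_
    rw [sum_comm]
    refine sum_congr rfl fun κ0 _ => ?_
    have hs : ∀ i, ∑ j : Fin m, q ^ ((j : ℕ) + 1) * a (κ' j) i =
        q * ∑ j : Fin m, q ^ (j : ℕ) * a (κ' j) i := by
      intro i
      rw [mul_sum]
      exact sum_congr rfl fun j _ => by ring
    simp only [hs]
    by_cases hP : ∀ i, a κ0 i + q * ∑ j : Fin m, q ^ (j : ℕ) * a (κ' j) i + v.1 i =
        q ^ (m + 1) * u.1 i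
    · rw [if_pos hP]
      have hle : ∀ i, ∑ j : Fin m, q ^ (j : ℕ) * a (κ' j) i ≤ q ^ m * u.1 i := by
        intro i
        have h1 := hP i
        rw [pow_succ'] at h1
        have : q * ∑ j : Fin m, q ^ (j : ℕ) * a (κ' j) i ≤ q * (q ^ m * u.1 i) := by
          rw [← mul_assoc]; omega
        exact Nat.le_of_mul_le_mul_left this (by omega)
      have hq2 : ∀ i, a κ0 i + v.1 i =
          q * (q ^ m * u.1 i - ∑ j : Fin m, q ^ (j : ℕ) * a (κ' j) i) := by
        intro i
        have h1 := hP i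
        rw [pow_succ', mul_assoc] at h1
        rw [Nat.mul_sub]; omega
      let t : box S D := ⟨fun i => q ^ m * u.1 i - ∑ j : Fin m, q ^ (j : ℕ) * a (κ' j) i, by
        rw [mem_box]
        refine ⟨fun i => ?_, fun i hi => ?_⟩
        · have h1 := hq2 i
          have h2 := hD κ0 i
          have h3 := (mem_box.mp v.2).1 i
          have h4 := Nat.mul_le_mul_right
            (q ^ m * u.1 i - ∑ j : Fin m, q ^ (j : ℕ) * a (κ' j) i) hq
          omega
        · rw [(mem_box.mp u.2).2 i hi]; simp⟩
      rw [sum_eq_single t]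
      · rw [if_pos, if_pos, mul_comm]
        · exact hq2
        · intro i
          have := hle i
          simp only [t]; omega
      · intro t' _ ht'
        by_cases h1 : ∀ i, ∑ j : Fin m, q ^ (j : ℕ) * a (κ' j) i + t'.1 i = q ^ m * u.1 i
        · exfalso
          apply ht'
          ext i
          have := h1 i
          simp only [t]; omega
        · rw [if_neg h1, zero_mul]
      · intro h; exact absurd (mem_univ _) h
    · rw [if_neg hP]
      refine sum_eq_zero fun t _ => ?_
      by_cases h1 : ∀ i, ∑ j : Fin m, q ^ (j : ℕ) * a (κ' j) i + t.1 i = q ^ m * u.1 i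
      · by_cases h2 : ∀ i, a κ0 i + v.1 i = q * t.1 i
        · exfalso
          apply hP
          intro i
          have e1 := h1 i
          have e2 := h2 i
          rw [pow_succ', mul_assoc, ← e1]
          linarith
        · rw [if_neg h2, mul_zero]
      · rw [if_neg h1, zero_mul]

open Classical in
theorem dwMat_trace (q : ℕ) (hq : 2 ≤ q) (b : T → R) (a : T → σ → ℕ) (S : Finset σ) (D : ℕ)
    (hD : ∀ κ i, a κ i ≤ D) (m : ℕ) (hm : m ≠ 0) :
    (dwMat q b a S D ^ m).trace = ∑ κ : Fin m → T, (∏ j, b (κ j)) *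
      if (∃ u : σ → ℕ, (∀ i ∉ S, u i = 0) ∧
        ∀ i, ∑ j : Fin m, q ^ (j : ℕ) * a (κ j) i + u i = q ^ m * u i) then 1 else 0 := by
  simp only [Matrix.trace, Matrix.diag, dwMat_pow q hq b a S D hD]
  rw [sum_comm]
  refine sum_congr rfl fun κ _ => ?_
  have hqm : 2 ≤ q ^ m := hq.trans (Nat.le_self_pow hm q)
  have huniq : ∀ u u' : σ → ℕ, (∀ i, ∑ j : Fin m, q ^ (j : ℕ) * a (κ j) i + u i = q ^ m * u i) →
      (∀ i, ∑ j : Fin m, q ^ (j : ℕ) * a (κ j) i + u' i = q ^ m * u' i) → u = u' := by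
    intro u u' h h'
    ext i
    have h1 := h i
    have h2 := h' i
    obtain ⟨Q, hQ⟩ := Nat.exists_eq_add_of_le hqm
    rw [hQ, add_mul] at h1 h2
    have h3 : (Q + 1) * u i = (Q + 1) * u' i := by
      rw [add_mul, add_mul]; omega
    exact Nat.eq_of_mul_eq_mul_left Q.succ_pos h3
  split_ifs with hex
  · obtain ⟨u, hu1, hu2⟩ := hex
    have hub : u ∈ box S D := by
      rw [mem_box]
      refine ⟨fun i => ?_, hu1⟩
      have h1 : ∑ j : Fin m, q ^ (j : ℕ) * a (κ j) i ≤ (q ^ m - 1) * D := by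
        calc _ ≤ ∑ j : Fin m, q ^ (j : ℕ) * D :=
              sum_le_sum fun j _ => Nat.mul_le_mul_left _ (hD _ _)
          _ = (∑ j ∈ range m, q ^ j) * D := by
              rw [← sum_mul, Fin.sum_univ_eq_sum_range (fun j => q ^ j)]
          _ ≤ _ := by
              refine Nat.mul_le_mul_right _ ?_
              have := Nat.geomSum_lt (s := range m) (n := m) hq (fun k hk => mem_range.mp hk)
              omega
      have h2 := hu2 i
      obtain ⟨Q, hQ⟩ := Nat.exists_eq_add_of_le hqm
      rw [hQ] at h1 h2
      have h3 : (Q + 1) * u i ≤ (Q + 1) * D := by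
        have e1 : 2 + Q - 1 = Q + 1 := by omega
        rw [e1] at h1
        have : (2 + Q) * u i = (Q + 1) * u i + u i := by ring
        omega
      exact Nat.le_of_mul_le_mul_left h3 Q.succ_pos
    rw [sum_eq_single ⟨u, hub⟩, if_pos hu2, mul_one]
    · intro u' _ hne
      rw [if_neg]
      intro h
      exact hne (Subtype.ext (huniq _ _ h hu2))
    · intro h; exact absurd (mem_univ _) h
  · rw [mul_zero]
    refine sum_eq_zero fun u _ => ?_
    rw [if_neg]
    intro h
    exact hex ⟨u.1, (mem_box.mp u.2).2, h⟩

open Classical in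
theorem trace_good (l : R) (hreg : ∀ x, l * x = 0 → x = 0) (q : ℕ) (hq : 2 ≤ q) (b : T → R)
    (a : T → σ → ℕ) (h : T → ℕ) (hb : ∀ κ, l ^ h κ ∣ b κ) (C1 : ℕ) (hC1 : 0 < C1)
    (ha : ∀ κ, ∑ i, a κ i ≤ C1 * h κ) (S : Finset σ) (C : ℕ) :
    Good l C ((S.card + 1) * ((C1 * C) ^ Fintype.card σ + 1))
      (PowerSeries.mk fun m => if m = 0 then 0 else ((q : R) ^ m - 1) ^ S.card *
        ∑ κ : Fin m → T, (∏ j, b (κ j)) *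
      if (∃ u : σ → ℕ, (∀ i ∉ S, u i = 0) ∧
        ∀ i, ∑ j : Fin m, q ^ (j : ℕ) * a (κ j) i + u i = q ^ m * u i) then 1 else 0) := by
  let D := ∑ κ, ∑ i, a κ i
  have hD : ∀ κ i, a κ i ≤ D := fun κ i =>
    (single_le_sum (f := fun i => a κ i) (fun _ _ => Nat.zero_le _) (mem_univ i)).trans
    (single_le_sum (f := fun κ => ∑ i, a κ i) (fun _ _ => Nat.zero_le _) (mem_univ κ))
  let wt : box S D → ℕ := fun u => (∑ i, u.1 i) / C1
  let A := dwMat q b a S D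
  have hdvd : ∀ u v, l ^ (2 * wt u) ∣ A u v * l ^ wt v := by
    intro u v
    simp only [A, dwMat, Matrix.of_apply]
    rw [sum_mul]
    refine dvd_sum fun κ _ => ?_
    split_ifs with hκ
    · have h0 : l ^ (h κ + wt v) ∣ b κ * l ^ wt v := by
        rw [pow_add]; exact mul_dvd_mul_right (hb κ) _
      refine dvd_trans (pow_dvd_pow l ?_) h0
      have h1 : ∑ i, a κ i + ∑ i, v.1 i = q * ∑ i, u.1 i := by
        rw [← sum_add_distrib, mul_sum]; exact sum_congr rfl fun i _ => hκ i
      have h2 := ha κ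
      have h3 : ∑ i, v.1 i < C1 * (wt v + 1) := by
        have := Nat.lt_div_mul_add hC1 (a := ∑ i, v.1 i)
        simp only [wt]
        rw [mul_add, mul_comm, mul_one]; exact this
      have h4 : C1 * wt u ≤ ∑ i, u.1 i := Nat.mul_div_le _ _
      have h5 : 2 * ∑ i, u.1 i ≤ q * ∑ i, u.1 i := Nat.mul_le_mul_right _ hq
      have h6 : C1 * (2 * wt u) < C1 * (h κ + wt v + 1) := by
        have e1 : C1 * (2 * wt u) = 2 * (C1 * wt u) := by ring
        have e2 : C1 * (h κ + wt v + 1) = C1 * h κ + C1 * (wt v + 1) := by ring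
        omega
      have := Nat.lt_of_mul_lt_mul_left h6
      omega
    · rw [zero_mul]; exact dvd_zero _
  choose y hy using hdvd
  let B : Matrix (box S D) (box S D) R := Matrix.of fun u v => l ^ wt u * y u v
  let Δ : Matrix (box S D) (box S D) R := Matrix.diagonal fun u => l ^ wt u
  have hAB : A * Δ = Δ * B := by
    ext u v
    rw [Matrix.mul_diagonal, Matrix.diagonal_mul, hy]
    simp only [B, Matrix.of_apply]
    ring
  have hABm : ∀ m, A ^ m * Δ = Δ * B ^ m := by
    intro m
    induction m with
    | zero => simp
    | succ m ih => rw [pow_succ, mul_assoc, hAB, ← mul_assoc, ih, mul_assoc, ← pow_succ]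
  have hregp : ∀ (k : ℕ) (x y : R), l ^ k * x = l ^ k * y → x = y := by
    intro k
    induction k with
    | zero => intro x y h; simpa using h
    | succ k ih =>
      intro x y h
      apply ih
      rw [← sub_eq_zero]
      apply hreg
      rw [mul_sub, ← mul_assoc, ← mul_assoc, ← pow_succ', h, sub_self]
  have htr : ∀ m, (A ^ m).trace = (B ^ m).trace := by
    intro m
    simp only [Matrix.trace, Matrix.diag]
    refine sum_congr rfl fun u _ => hregp (wt u) _ _ ?_
    have := congrFun (congrFun (hABm m) u) u
    rw [Matrix.mul_diagonal, Matrix.diagonal_mul] at this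
    rw [← this, mul_comm]
  have hgood := Good_trace_mul (l := l) (C := C) (K := (C1 * C) ^ Fintype.card σ) B
    (univ.filter fun u => wt u < C) ?_ ?_ (q : R) S.card
  · refine Eq.mp (congrArg (Good l C _) ?_) hgood
    ext m
    simp only [PowerSeries.coeff_mk]
    by_cases hm : m = 0
    · rw [if_pos hm, if_pos hm]
    · rw [if_neg hm, if_neg hm, ← htr, dwMat_trace q hq b a S D hD m hm]
  · have : (univ.filter fun u : box S D => wt u < C).card ≤
        (Fintype.piFinset fun _ : σ => range (C1 * C)).card := by
      refine card_le_card_of_injOn (fun u => u.1) ?_ ?_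
      · intro u hu
        rw [mem_coe, mem_filter] at hu
        rw [mem_coe, Fintype.mem_piFinset]
        intro i
        rw [mem_range]
        have h1 : u.1 i ≤ ∑ i, u.1 i :=
          single_le_sum (f := fun i => u.1 i) (fun _ _ => Nat.zero_le _) (mem_univ i)
        have h2 : ∑ i, u.1 i < C * C1 := (Nat.div_lt_iff_lt_mul hC1).mp hu.2
        rw [mul_comm]; exact h1.trans_lt h2
      · intro u _ v _ huv
        exact Subtype.ext huv
    refine this.trans ?_
    rw [Fintype.card_piFinset]
    simp
  · intro u hu v
    have : C ≤ wt u := by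
      by_contra hlt
      exact hu (mem_filter.mpr ⟨mem_univ _, by omega⟩)
    simp only [B, Matrix.of_apply]
    exact Dvd.dvd.mul_right (pow_dvd_pow _ this) _

end Trace
end DworkRat


namespace DworkRat
open Finset

section Char
variable (p : ℕ) [Fact p.Prime]

theorem charP_om : CharP (AlgebraicClosure (ZMod p)) p :=
  charP_of_injective_algebraMap (algebraMap (ZMod p) (AlgebraicClosure (ZMod p))).injective p

/-- The subfield with `p^s` elements, as a finset. -/
noncomputable def Fs (s : ℕ) : Finset (AlgebraicClosure (ZMod p)) :=
  open Classical in
  (Polynomial.X ^ (p ^ s) - Polynomial.X : Polynomial (AlgebraicClosure (ZMod p))).roots.toFinset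

variable {p}

theorem mem_Fs {s : ℕ} (hs : s ≠ 0) {x : AlgebraicClosure (ZMod p)} :
    x ∈ Fs p s ↔ x ^ (p ^ s) = x := by
  classical
  have h1 : 1 < p ^ s := Nat.one_lt_pow hs (Fact.out : p.Prime).one_lt
  have hne := FiniteField.X_pow_card_sub_X_ne_zero (AlgebraicClosure (ZMod p)) h1
  simp only [Fs, Multiset.mem_toFinset, Polynomial.mem_roots hne, Polynomial.IsRoot.def,
    Polynomial.eval_sub, Polynomial.eval_pow, Polynomial.eval_X, sub_eq_zero]

theorem card_Fs {s : ℕ} (hs : s ≠ 0) : (Fs p s).card = p ^ s := by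
  classical
  have := charP_om p
  have h1 : 1 < p ^ s := Nat.one_lt_pow hs (Fact.out : p.Prime).one_lt
  have hsep : (Polynomial.X ^ (p ^ s) - Polynomial.X :
      Polynomial (AlgebraicClosure (ZMod p))).Separable :=
    galois_poly_separable p (p ^ s) (dvd_pow_self p hs)
  rw [Fs, Multiset.toFinset_card_of_nodup (Polynomial.nodup_roots hsep),
    ← (IsAlgClosed.splits _).natDegree_eq_card_roots]
  exact FiniteField.X_pow_card_sub_X_natDegree_eq _ h1

theorem Fs_add {s : ℕ} (hs : s ≠ 0) {x y : AlgebraicClosure (ZMod p)} (hx : x ∈ Fs p s)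
    (hy : y ∈ Fs p s) : x + y ∈ Fs p s := by
  have := charP_om p
  rw [mem_Fs hs] at *
  rw [add_pow_char_pow, hx, hy]

theorem Fs_sub {s : ℕ} (hs : s ≠ 0) {x y : AlgebraicClosure (ZMod p)} (hx : x ∈ Fs p s)
    (hy : y ∈ Fs p s) : x - y ∈ Fs p s := by
  have := charP_om p
  rw [mem_Fs hs] at *
  rw [sub_pow_char_pow, hx, hy]

theorem Fs_mul {s : ℕ} (hs : s ≠ 0) {x y : AlgebraicClosure (ZMod p)} (hx : x ∈ Fs p s)
    (hy : y ∈ Fs p s) : x * y ∈ Fs p s := by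
  rw [mem_Fs hs] at *
  rw [mul_pow, hx, hy]

theorem Fs_inv {s : ℕ} (hs : s ≠ 0) {x : AlgebraicClosure (ZMod p)} (hx : x ∈ Fs p s) :
    x⁻¹ ∈ Fs p s := by
  rw [mem_Fs hs] at *
  rw [inv_pow, hx]

theorem Fs_zero {s : ℕ} (hs : s ≠ 0) : (0 : AlgebraicClosure (ZMod p)) ∈ Fs p s := by
  rw [mem_Fs hs, zero_pow (pow_ne_zero _ (Fact.out : p.Prime).ne_zero)]

theorem Fs_one {s : ℕ} (hs : s ≠ 0) : (1 : AlgebraicClosure (ZMod p)) ∈ Fs p s := by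
  rw [mem_Fs hs, one_pow]

theorem Fs_sum {s : ℕ} (hs : s ≠ 0) {ι : Type*} (t : Finset ι) (x : ι → AlgebraicClosure (ZMod p))
    (hx : ∀ i ∈ t, x i ∈ Fs p s) : ∑ i ∈ t, x i ∈ Fs p s :=
  sum_induction x (· ∈ Fs p s) (fun _ _ => Fs_add hs) (Fs_zero hs) hx

theorem Fs_prod {s : ℕ} (hs : s ≠ 0) {ι : Type*} (t : Finset ι) (x : ι → AlgebraicClosure (ZMod p))
    (hx : ∀ i ∈ t, x i ∈ Fs p s) : ∏ i ∈ t, x i ∈ Fs p s :=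
  prod_induction x (· ∈ Fs p s) (fun _ _ => Fs_mul hs) (Fs_one hs) hx

theorem Fs_pow {s : ℕ} (hs : s ≠ 0) {x : AlgebraicClosure (ZMod p)} (hx : x ∈ Fs p s) (n : ℕ) :
    x ^ n ∈ Fs p s := by
  rw [mem_Fs hs] at *
  rw [← pow_mul, mul_comm, pow_mul, hx]

/-- The absolute trace. -/
noncomputable def tr (s : ℕ) (x : AlgebraicClosure (ZMod p)) : AlgebraicClosure (ZMod p) :=
  ∑ i ∈ range s, x ^ (p ^ i)

theorem tr_add (s : ℕ) (x y : AlgebraicClosure (ZMod p)) : tr s (x + y) = tr s x + tr s y := by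
  have := charP_om p
  simp only [tr, add_pow_char_pow, sum_add_distrib]

theorem tr_pow {s : ℕ} (hs : s ≠ 0) {x : AlgebraicClosure (ZMod p)} (hx : x ∈ Fs p s) :
    tr s x ^ p = tr s x := by
  have := charP_om p
  rw [mem_Fs hs] at hx
  rw [tr, sum_pow_char]
  simp only [← pow_mul, ← pow_succ]
  have h1 := sum_range_succ (fun i => x ^ p ^ i) s
  have h2 := sum_range_succ' (fun i => x ^ p ^ i) s
  rw [h1, hx, pow_zero, pow_one] at h2
  exact (add_right_cancel h2).symm

theorem exists_nat_of_pow {x : AlgebraicClosure (ZMod p)} (hx : x ^ p = x) :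
    ∃ c : ℕ, (c : AlgebraicClosure (ZMod p)) = x := by
  have := charP_om p
  have h0 := (Subfield.mem_bot_iff_pow_eq_self (AlgebraicClosure (ZMod p)) p).mpr hx
  have h1 := (mem_bot_iff_intCast p (AlgebraicClosure (ZMod p))).mp h0
  obtain ⟨z, hz⟩ := h1
  have hp : (p : ℤ) ≠ 0 := by exact_mod_cast (Fact.out : p.Prime).ne_zero
  refine ⟨(z % p).toNat, ?_⟩
  have h2 : ((z % p).toNat : ℤ) = z % p := Int.toNat_of_nonneg (Int.emod_nonneg _ hp)
  rw [← hz, ← Int.cast_natCast, h2]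
  exact (CharP.intCast_eq_intCast (AlgebraicClosure (ZMod p)) p).mpr (Int.mod_modEq _ _)

theorem exists_tr {s : ℕ} (hs : s ≠ 0) {x : AlgebraicClosure (ZMod p)} (hx : x ∈ Fs p s) :
    ∃ c : ℕ, (c : AlgebraicClosure (ZMod p)) = tr s x := exists_nat_of_pow (tr_pow hs hx)

theorem exists_tr_one {s : ℕ} (hs : s ≠ 0) :
    ∃ x ∈ Fs p s, tr s x = 1 := by
  have hp := (Fact.out : p.Prime)
  have h1 : ∃ x ∈ Fs p s, tr s x ≠ 0 := by
    by_contra! hcon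
    obtain ⟨s, rfl⟩ := Nat.exists_eq_succ_of_ne_zero hs
    let P : Polynomial (AlgebraicClosure (ZMod p)) := ∑ i ∈ range (s + 1), Polynomial.X ^ (p ^ i)
    have hdeg : P.natDegree ≤ p ^ s := by
      refine Polynomial.natDegree_sum_le_of_forall_le _ _ fun i hi => ?_
      rw [Polynomial.natDegree_X_pow]
      exact Nat.pow_le_pow_right hp.pos (by have := mem_range.mp hi; omega)
    have hc : P.coeff (p ^ s) = 1 := by
      simp only [P, Polynomial.finset_sum_coeff, Polynomial.coeff_X_pow]
      rw [sum_eq_single s]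
      · simp
      · intro i _ hi
        rw [if_neg]
        intro h
        exact hi (Nat.pow_right_injective hp.two_le h).symm
      · simp
    have hP : P ≠ 0 := by
      intro h
      rw [h] at hc
      simp at hc
    have h2 := Polynomial.card_le_degree_of_subset_roots (p := P) (Z := Fs p (s + 1)) (by
      intro x hx
      rw [Polynomial.mem_roots hP, Polynomial.IsRoot.def]
      have := hcon x hx
      simpa [tr, P, Polynomial.eval_finset_sum] using this)
    rw [card_Fs hs] at h2
    have h3 := Nat.pow_lt_pow_right hp.one_lt (Nat.lt_succ_self s)
    exact absurd (h2.trans hdeg) (not_le.mpr h3)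
  obtain ⟨x, hx, hx0⟩ := h1
  have hc : ∀ i, (tr s x)⁻¹ ^ (p ^ i) = (tr s x)⁻¹ := by
    intro i
    induction i with
    | zero => simp
    | succ i ih => rw [pow_succ, pow_mul, ih, inv_pow, tr_pow hs hx]
  refine ⟨(tr s x)⁻¹ * x, Fs_mul hs ?_ hx, ?_⟩
  · rw [mem_Fs hs]; exact hc s
  · conv_lhs => rw [tr]
    simp only [mul_pow, hc]
    rw [← mul_sum]
    exact inv_mul_cancel₀ hx0

variable {R : Type*} [CommRing R] (D : SplitData p R)

open Classical in
/-- The additive character. -/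
noncomputable def chi (s : ℕ) (x : AlgebraicClosure (ZMod p)) : R :=
  if h : ∃ c : ℕ, (c : AlgebraicClosure (ZMod p)) = tr s x then D.η ^ h.choose else 0

theorem chi_eq {s : ℕ} {x : AlgebraicClosure (ZMod p)} (c : ℕ)
    (hc : (c : AlgebraicClosure (ZMod p)) = tr s x) : chi D s x = D.η ^ c := by
  have := charP_om p
  have h : ∃ c : ℕ, (c : AlgebraicClosure (ZMod p)) = tr s x := ⟨c, hc⟩
  rw [chi, dif_pos h]
  have h1 : (h.choose : AlgebraicClosure (ZMod p)) = c := h.choose_spec.trans hc.symm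
  exact pow_eq_pow_of_modEq ((CharP.natCast_eq_natCast _ p).mp h1) D.η_pow

theorem chi_zero (s : ℕ) : chi D s 0 = 1 := by
  rw [chi_eq D 0, pow_zero]
  rw [tr, Nat.cast_zero, sum_eq_zero]
  intro i _
  exact zero_pow (pow_ne_zero _ (Fact.out : p.Prime).ne_zero)

theorem chi_add {s : ℕ} (hs : s ≠ 0) {x y : AlgebraicClosure (ZMod p)} (hx : x ∈ Fs p s)
    (hy : y ∈ Fs p s) : chi D s (x + y) = chi D s x * chi D s y := by
  obtain ⟨c, hc⟩ := exists_tr hs hx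
  obtain ⟨d, hd⟩ := exists_tr hs hy
  rw [chi_eq D c hc, chi_eq D d hd, ← pow_add]
  apply chi_eq
  rw [tr_add, Nat.cast_add, hc, hd]

theorem chi_sum {s : ℕ} (hs : s ≠ 0) {ι : Type*} (t : Finset ι)
    (x : ι → AlgebraicClosure (ZMod p)) (hx : ∀ i ∈ t, x i ∈ Fs p s) :
    chi D s (∑ i ∈ t, x i) = ∏ i ∈ t, chi D s (x i) := by
  classical
  induction t using Finset.induction_on with
  | empty => simp [chi_zero]
  | insert a t ha ih =>
    rw [sum_insert ha, prod_insert ha, chi_add D hs (hx _ (mem_insert_self _ _))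
      (Fs_sum hs _ _ fun i hi => hx i (mem_insert_of_mem hi)),
      ih fun i hi => hx i (mem_insert_of_mem hi)]

theorem sum_chi {s : ℕ} (hs : s ≠ 0) : ∑ x ∈ Fs p s, chi D s x = 0 := by
  obtain ⟨x0, hx0, h1⟩ := exists_tr_one (p := p) hs
  apply D.η_fix
  have h2 : chi D s x0 = D.η := by
    rw [chi_eq D 1, pow_one]
    rw [h1, Nat.cast_one]
  rw [mul_sum]
  refine sum_bij' (fun x _ => x0 + x) (fun x _ => x - x0) (fun x hx => Fs_add hs hx0 hx)
    (fun x hx => Fs_sub hs hx hx0) (fun x _ => by ring) (fun x _ => by ring) fun x hx => ?_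
  rw [chi_add D hs hx0 hx, h2]

open Classical in
theorem sum_chi_mul {s : ℕ} (hs : s ≠ 0) {a : AlgebraicClosure (ZMod p)} (ha : a ∈ Fs p s) :
    ∑ x ∈ Fs p s, chi D s (x * a) = if a = 0 then (p : R) ^ s else 0 := by
  split_ifs with h
  · simp only [h, mul_zero, chi_zero, sum_const, card_Fs hs]
    simp
  · rw [← sum_chi D hs]
    refine sum_bij' (fun x _ => x * a) (fun x _ => x * a⁻¹) (fun x hx => Fs_mul hs hx ha)
      (fun x hx => Fs_mul hs hx (Fs_inv hs ha)) (fun x _ => ?_) (fun x _ => ?_) fun x hx => rfl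
    · field_simp
    · field_simp

open Classical in
theorem count_chi {s : ℕ} (hs : s ≠ 0) {n r : ℕ}
    (v : (Fin n → AlgebraicClosure (ZMod p)) → Fin r → AlgebraicClosure (ZMod p))
    (hv : ∀ x ∈ Fintype.piFinset (fun _ : Fin n => Fs p s), ∀ j, v x j ∈ Fs p s) :
    ∑ w ∈ Fintype.piFinset (fun _ : Fin n ⊕ Fin r => Fs p s),
      chi D s (∑ j, w (Sum.inr j) * v (fun i => w (Sum.inl i)) j) =
    ((p : R) ^ s) ^ r * ((Fintype.piFinset (fun _ : Fin n => Fs p s)).filter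
      (fun x => ∀ j, v x j = 0)).card := by
  have h1 : ∑ w ∈ Fintype.piFinset (fun _ : Fin n ⊕ Fin r => Fs p s),
      chi D s (∑ j, w (Sum.inr j) * v (fun i => w (Sum.inl i)) j) =
      ∑ xy ∈ Fintype.piFinset (fun _ : Fin n => Fs p s) ×ˢ
        Fintype.piFinset (fun _ : Fin r => Fs p s),
        chi D s (∑ j, xy.2 j * v xy.1 j) := by
    refine sum_bij' (fun w _ => (fun i => w (Sum.inl i), fun j => w (Sum.inr j)))
      (fun xy _ => Sum.elim xy.1 xy.2) ?_ ?_ ?_ ?_ ?_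
    · intro w hw
      simp only [Fintype.mem_piFinset, mem_product] at *
      exact ⟨fun i => hw _, fun i => hw _⟩
    · intro xy hxy
      simp only [Fintype.mem_piFinset, mem_product] at *
      rintro (i | j)
      · exact hxy.1 i
      · exact hxy.2 j
    · intro w hw
      ext (i | j) <;> rfl
    · intro xy hxy
      rfl
    · intro w hw
      rfl
  rw [h1, sum_product]
  have h2 : ∀ x ∈ Fintype.piFinset (fun _ : Fin n => Fs p s),
      ∑ y ∈ Fintype.piFinset (fun _ : Fin r => Fs p s), chi D s (∑ j, y j * v x j) =
      if ∀ j, v x j = 0 then ((p : R) ^ s) ^ r else 0 := by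
    intro x hx
    have h3 : ∀ y ∈ Fintype.piFinset (fun _ : Fin r => Fs p s),
        chi D s (∑ j, y j * v x j) = ∏ j, chi D s (y j * v x j) := by
      intro y hy
      rw [Fintype.mem_piFinset] at hy
      exact chi_sum D hs _ _ fun j _ => Fs_mul hs (hy j) (hv x hx j)
    rw [sum_congr rfl h3, ← prod_univ_sum (fun _ => Fs p s) fun j y => chi D s (y * v x j)]
    rw [prod_congr rfl fun j _ => sum_chi_mul D hs (hv x hx j)]
    split_ifs with h4
    · rw [prod_congr rfl fun j _ => if_pos (h4 j)]
      simp
    · push Not at h4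
      obtain ⟨j, hj⟩ := h4
      exact prod_eq_zero (mem_univ j) (if_neg hj)
  rw [sum_congr rfl h2, ← sum_filter, sum_const, nsmul_eq_mul, mul_comm]

/-- Power sums of Teichmüller representatives. -/
theorem sum_teich {s : ℕ} (hs : s ≠ 0) (v : ℕ) :
    ∑ t ∈ Fs p s, D.τ t ^ v = (if v = 0 then 1 else 0) +
      (((p : R) ^ s - 1) * if (p ^ s - 1) ∣ v then 1 else 0) := by
  classical
  have hQ : 1 < p ^ s := Nat.one_lt_pow hs (Fact.out : p.Prime).one_lt
  have hcast : ((p ^ s - 1 : ℕ) : R) = (p : R) ^ s - 1 := by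
    rw [Nat.cast_sub hQ.le]; simp
  by_cases hv : v = 0
  · subst hv
    simp [card_Fs hs]
  rw [if_neg hv, zero_add]
  have h0 : ∑ t ∈ Fs p s, D.τ t ^ v = ∑ t ∈ (Fs p s).erase 0, D.τ t ^ v := by
    rw [← add_sum_erase _ _ (Fs_zero hs), D.τ_zero, zero_pow hv, zero_add]
  have hone : ∀ t ∈ (Fs p s).erase 0, t ^ (p ^ s - 1) = 1 := by
    intro t ht
    rw [mem_erase, mem_Fs hs] at ht
    have : t * t ^ (p ^ s - 1) = t * 1 := by
      rw [← pow_succ', Nat.sub_add_cancel hQ.le, ht.2, mul_one]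
    exact mul_left_cancel₀ ht.1 this
  have hcard : ((Fs p s).erase 0).card = p ^ s - 1 := by
    rw [card_erase_of_mem (Fs_zero hs), card_Fs hs]
  rw [h0]
  split_ifs with hdv
  · obtain ⟨k, rfl⟩ := hdv
    rw [mul_one, ← hcast, ← hcard, ← nsmul_one, ← sum_const]
    refine sum_congr rfl fun t ht => ?_
    rw [← map_pow D.τ, hcard, pow_mul, hone t ht, one_pow, map_one D.τ]
  · rw [mul_zero]
    have h1 : ∃ t ∈ (Fs p s).erase 0, t ^ v ≠ 1 := by
      by_contra! hcon
      have hv' : 0 < v % (p ^ s - 1) := Nat.pos_of_ne_zero fun h => hdv (Nat.dvd_of_mod_eq_zero h)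
      have h2 : ∀ t ∈ (Fs p s).erase 0, t ^ (v % (p ^ s - 1)) = 1 := by
        intro t ht
        have h3 := hcon t ht
        rw [← Nat.div_add_mod v (p ^ s - 1), pow_add, pow_mul, hone t ht, one_pow, one_mul] at h3
        exact h3
      have hP : (Polynomial.X ^ (v % (p ^ s - 1)) - Polynomial.C 1 :
          Polynomial (AlgebraicClosure (ZMod p))) ≠ 0 := Polynomial.X_pow_sub_C_ne_zero hv' 1
      have h4 := Polynomial.card_le_degree_of_subset_roots (Z := (Fs p s).erase 0) (by
        intro t ht
        rw [Polynomial.mem_roots hP, Polynomial.IsRoot.def]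
        simp [h2 t ht])
      rw [hcard, Polynomial.natDegree_X_pow_sub_C] at h4
      have := Nat.mod_lt v (show 0 < p ^ s - 1 by omega)
      omega
    obtain ⟨t0, ht0, hne⟩ := h1
    have hu := D.τ_unit _ _ hne
    have h5 : (D.τ (t0 ^ v) - D.τ 1) * ∑ t ∈ (Fs p s).erase 0, D.τ t ^ v = 0 := by
      rw [map_one D.τ, sub_mul, one_mul, sub_eq_zero, mul_sum]
      rw [mem_erase] at ht0
      refine sum_bij' (fun t _ => t0 * t) (fun t _ => t0⁻¹ * t) ?_ ?_ ?_ ?_ ?_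
      · intro t ht
        rw [mem_erase] at *
        exact ⟨mul_ne_zero ht0.1 ht.1, Fs_mul hs ht0.2 ht.2⟩
      · intro t ht
        rw [mem_erase] at *
        exact ⟨mul_ne_zero (inv_ne_zero ht0.1) ht.1, Fs_mul hs (Fs_inv hs ht0.2) ht.2⟩
      · intro t _
        exact inv_mul_cancel_left₀ ht0.1 t
      · intro t _
        exact mul_inv_cancel_left₀ ht0.1 t
      · intro t _
        rw [map_mul D.τ, mul_pow, map_pow D.τ]
    exact hu.mul_right_eq_zero.mp h5

end Char
end DworkRat


namespace DworkRat
open Finset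

theorem dvd_prod_sub_prod {R ι : Type*} [CommRing R] (d : R) (t : Finset ι) (x y : ι → R)
    (h : ∀ i ∈ t, d ∣ x i - y i) : d ∣ ∏ i ∈ t, x i - ∏ i ∈ t, y i := by
  classical
  induction t using Finset.induction_on with
  | empty => simp
  | insert a t ha ih =>
    rw [prod_insert ha, prod_insert ha]
    have h1 := h a (mem_insert_self _ _)
    have h2 := ih fun i hi => h i (mem_insert_of_mem hi)
    have : x a * ∏ i ∈ t, x i - y a * ∏ i ∈ t, y i =
        (x a - y a) * ∏ i ∈ t, x i + y a * (∏ i ∈ t, x i - ∏ i ∈ t, y i) := by ring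
    rw [this]
    exact dvd_add (h1.mul_right _) (h2.mul_left _)

section Expand
variable {p : ℕ} [Fact p.Prime] {R : Type*} [CommRing R] (D : SplitData p R)
variable {σ : Type} [Fintype σ] [DecidableEq σ]

theorem pow_fix {M : Type*} [Monoid M] {x : M} {q : ℕ} (h : x ^ q = x) (j : ℕ) :
    x ^ (q ^ j) = x := by
  induction j with
  | zero => simp
  | succ j ih => rw [pow_succ, pow_mul, ih, h]

theorem expand_term (e : ℕ) (g : MvPolynomial σ (AlgebraicClosure (ZMod p)))
    (hg : ∀ k, g.coeff k ^ (p ^ e) = g.coeff k) (M : ℕ) (θ : ℕ → R)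
    (w : σ → AlgebraicClosure (ZMod p)) (j : ℕ) (κ : g.support × Fin e → Fin M) :
    ∏ ki : g.support × Fin e, θ (κ ki) *
      D.τ (g.coeff ki.1.1 * ∏ i, w i ^ (ki.1.1 i)) ^ (p ^ ((ki.2 : ℕ) + e * j) * (κ ki : ℕ)) =
    (∏ ki : g.support × Fin e, θ (κ ki) * D.τ (g.coeff ki.1.1) ^ (p ^ (ki.2 : ℕ) * (κ ki : ℕ))) *
      ∏ i, D.τ (w i) ^ ((p ^ e) ^ j *
        ∑ ki : g.support × Fin e, p ^ (ki.2 : ℕ) * (κ ki : ℕ) * ki.1.1 i) := by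
  have h1 : ∀ i, D.τ (w i) ^ ((p ^ e) ^ j *
        ∑ ki : g.support × Fin e, p ^ (ki.2 : ℕ) * (κ ki : ℕ) * ki.1.1 i) =
      ∏ ki : g.support × Fin e, D.τ (w i) ^ ((p ^ e) ^ j *
        (p ^ (ki.2 : ℕ) * (κ ki : ℕ) * ki.1.1 i)) := by
    intro i
    rw [mul_sum, prod_pow_eq_pow_sum]
  rw [prod_congr rfl fun i _ => h1 i, prod_comm, ← prod_mul_distrib]
  refine prod_congr rfl fun ki _ => ?_
  rw [map_mul D.τ, mul_pow, mul_assoc]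
  congr 2
  · have h2 : D.τ (g.coeff ki.1.1) ^ ((p ^ e) ^ j) = D.τ (g.coeff ki.1.1) := by
      rw [← map_pow D.τ, pow_fix (hg _)]
    rw [pow_add, pow_mul p e j, mul_comm (p ^ (ki.2 : ℕ)), mul_assoc, pow_mul, h2]
  · rw [map_prod D.τ, ← prod_pow]
    refine prod_congr rfl fun i _ => ?_
    rw [map_pow D.τ, ← pow_mul]
    congr 1
    rw [pow_add, pow_mul p e j]
    ring

theorem expand_chi (e : ℕ) (he : e ≠ 0) (g : MvPolynomial σ (AlgebraicClosure (ZMod p)))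
    (hg : ∀ k, g.coeff k ^ (p ^ e) = g.coeff k) :
    ∃ C1, 0 < C1 ∧ ∀ M : ℕ, ∃ (T : Type) (_ : Fintype T) (b : T → R) (a : T → σ → ℕ) (h : T → ℕ),
      (∀ κ, D.l ^ h κ ∣ b κ) ∧ (∀ κ, ∑ i, a κ i ≤ C1 * h κ) ∧ ∀ m, m ≠ 0 →
      D.l ^ M ∣ ∑ w ∈ Fintype.piFinset (fun _ : σ => Fs p (m * e)),
          chi D (m * e) (MvPolynomial.eval w g) -
        ∑ κ : Fin m → T, (∏ j, b (κ j)) *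
          ∏ i, ∑ t ∈ Fs p (m * e), D.τ t ^ (∑ j : Fin m, (p ^ e) ^ (j : ℕ) * a (κ j) i) := by
  classical
  refine ⟨∑ k ∈ g.support, p ^ e * (∑ i, k i) + 1, Nat.succ_pos _, fun M => ?_⟩
  obtain ⟨θ, hθ, hsplit⟩ := D.split M
  refine ⟨g.support × Fin e → Fin M, inferInstance,
    fun κ => ∏ ki : g.support × Fin e, θ (κ ki) *
      D.τ (g.coeff ki.1.1) ^ (p ^ (ki.2 : ℕ) * (κ ki : ℕ)),
    fun κ i => ∑ ki : g.support × Fin e, p ^ (ki.2 : ℕ) * (κ ki : ℕ) * ki.1.1 i,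
    fun κ => ∑ ki, (κ ki : ℕ), ?_, ?_, ?_⟩
  · intro κ
    simp only
    rw [← prod_pow_eq_pow_sum]
    exact prod_dvd_prod_of_dvd _ _ fun ki _ => (hθ _).mul_right _
  · intro κ
    simp only
    rw [sum_comm, mul_sum]
    refine sum_le_sum fun ki _ => ?_
    rw [← mul_sum]
    have h1 : p ^ e * (∑ i, ki.1.1 i) ≤ ∑ k ∈ g.support, p ^ e * (∑ i, k i) :=
      single_le_sum (f := fun k : σ →₀ ℕ => p ^ e * (∑ i, k i)) (fun _ _ => Nat.zero_le _) ki.1.2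
    have h2 : p ^ (ki.2 : ℕ) ≤ p ^ e :=
      Nat.pow_le_pow_right (Fact.out : p.Prime).pos ki.2.2.le
    calc p ^ (ki.2 : ℕ) * (κ ki : ℕ) * ∑ i, ki.1.1 i
        = (p ^ (ki.2 : ℕ) * ∑ i, ki.1.1 i) * (κ ki : ℕ) := by ring
      _ ≤ _ := Nat.mul_le_mul_right _ (((Nat.mul_le_mul_right _ h2).trans h1).trans
        (Nat.le_succ _))
  · intro m hm
    have hs : m * e ≠ 0 := mul_ne_zero hm he
    have hcoef : ∀ k, g.coeff k ∈ Fs p (m * e) := by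
      intro k
      rw [mem_Fs hs, mul_comm, pow_mul]
      exact pow_fix (hg k) m
    have key : ∀ w ∈ Fintype.piFinset (fun _ : σ => Fs p (m * e)),
        D.l ^ M ∣ chi D (m * e) (MvPolynomial.eval w g) -
        ∑ κ : Fin m → (g.support × Fin e → Fin M), ∏ j, ((∏ ki : g.support × Fin e,
          θ (κ j ki) * D.τ (g.coeff ki.1.1) ^ (p ^ (ki.2 : ℕ) * (κ j ki : ℕ))) *
          ∏ i, D.τ (w i) ^ ((p ^ e) ^ (j : ℕ) *
        ∑ ki : g.support × Fin e, p ^ (ki.2 : ℕ) * (κ j ki : ℕ) * ki.1.1 i)) := by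
      intro w hw
      rw [Fintype.mem_piFinset] at hw
      have hx : ∀ k, g.coeff k * ∏ i, w i ^ (k i) ∈ Fs p (m * e) := fun k =>
        Fs_mul hs (hcoef k) (Fs_prod hs _ _ fun i _ => Fs_pow hs (hw i) _)
      rw [MvPolynomial.eval_eq', chi_sum D hs _ _ fun k _ => hx k]
      have h1 : D.l ^ M ∣ ∏ k ∈ g.support, chi D (m * e) (g.coeff k * ∏ i, w i ^ (k i)) -
          ∏ k ∈ g.support, ∏ i ∈ range (m * e), ∑ n ∈ range M,
            θ n * D.τ (g.coeff k * ∏ i, w i ^ (k i)) ^ (p ^ i * n) := by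
        refine dvd_prod_sub_prod _ _ _ _ fun k _ => ?_
        obtain ⟨c, hc⟩ := exists_tr hs (hx k)
        rw [chi_eq D c hc]
        exact hsplit _ _ ((mem_Fs hs).mp (hx k)) c hc
      convert h1 using 2
      have h2 : ∀ k : σ →₀ ℕ, ∏ i ∈ range (m * e), ∑ n ∈ range M,
            θ n * D.τ (g.coeff k * ∏ i, w i ^ (k i)) ^ (p ^ i * n) =
          ∏ j : Fin m, ∏ i : Fin e, ∑ n : Fin M,
            θ n * D.τ (g.coeff k * ∏ i, w i ^ (k i)) ^ (p ^ ((i : ℕ) + e * j) * (n : ℕ)) := by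
        intro k
        rw [← Fin.prod_univ_eq_prod_range (fun i => ∑ n ∈ range M,
            θ n * D.τ (g.coeff k * ∏ i, w i ^ (k i)) ^ (p ^ i * n)),
          ← Fintype.prod_prod_type']
        refine (Fintype.prod_equiv finProdFinEquiv _ _ fun ji => ?_).symm
        rw [← Fin.sum_univ_eq_sum_range (fun n =>
          θ n * D.τ (g.coeff k * ∏ i, w i ^ (k i)) ^ (p ^ ((finProdFinEquiv ji : Fin _) : ℕ) * n))]
        rfl
      rw [prod_congr rfl fun k _ => h2 k, prod_comm]
      rw [← Fintype.prod_sum (fun (j : Fin m) (κ : g.support × Fin e → Fin M) =>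
        (∏ ki : g.support × Fin e,
          θ (κ ki) * D.τ (g.coeff ki.1.1) ^ (p ^ (ki.2 : ℕ) * (κ ki : ℕ))) *
          ∏ i, D.τ (w i) ^ ((p ^ e) ^ (j : ℕ) *
        ∑ ki : g.support × Fin e, p ^ (ki.2 : ℕ) * (κ ki : ℕ) * ki.1.1 i))]
      refine prod_congr rfl fun j _ => ?_
      rw [sum_congr rfl fun κ _ => (expand_term D e g hg M θ w j κ).symm]
      rw [← Fintype.prod_sum (fun (ki : g.support × Fin e) (n : Fin M) => θ n *
        D.τ (g.coeff ki.1.1 * ∏ i, w i ^ (ki.1.1 i)) ^ (p ^ ((ki.2 : ℕ) + e * j) * (n : ℕ)))]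
      rw [Fintype.prod_prod_type, ← prod_coe_sort g.support]
    have h3 := dvd_sum key
    rw [sum_sub_distrib] at h3
    convert h3 using 2
    rw [sum_comm]
    refine sum_congr rfl fun κ _ => ?_
    simp only [prod_mul_distrib]
    rw [← mul_sum]
    congr 1
    rw [prod_univ_sum]
    refine sum_congr rfl fun w _ => ?_
    rw [prod_comm]
    exact prod_congr rfl fun i _ => (prod_pow_eq_pow_sum _ _ _).symm

open Classical in
theorem prod_teich {s : ℕ} (hs : s ≠ 0) (v : σ → ℕ) :
    ∏ i, ∑ t ∈ Fs p s, D.τ t ^ v i = ∑ S : Finset σ, ((p : R) ^ s - 1) ^ S.card *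
      if (∃ u : σ → ℕ, (∀ i ∉ S, u i = 0) ∧ ∀ i, v i + u i = p ^ s * u i) then 1 else 0 := by
  have hQ : 1 < p ^ s := Nat.one_lt_pow hs (Fact.out : p.Prime).one_lt
  have h0 : ∏ i, ∑ t ∈ Fs p s, D.τ t ^ v i = ∏ i, ((((p : R) ^ s - 1) * if (p ^ s - 1) ∣ v i then
      1 else 0) + (if v i = 0 then 1 else 0)) :=
    prod_congr rfl fun i _ => by rw [sum_teich D hs, add_comm]
  rw [h0, prod_add, powerset_univ]
  refine sum_congr rfl fun S _ => ?_
  rw [prod_mul_distrib, prod_const, mul_assoc]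
  congr 1
  split_ifs with h
  · obtain ⟨u, hu1, hu2⟩ := h
    rw [prod_eq_one, prod_eq_one, mul_one]
    · intro i hi
      rw [if_pos]
      have h1 := hu2 i
      rw [hu1 i (mem_sdiff.mp hi).2] at h1
      simpa using h1
    · intro i hi
      rw [if_pos]
      refine ⟨u i, ?_⟩
      rw [Nat.sub_mul, one_mul, ← hu2 i]; simp
  · by_contra hne
    apply h
    have hA : ∀ i ∈ S, (p ^ s - 1) ∣ v i := by
      intro i hi
      by_contra hd
      exact hne (by rw [prod_eq_zero hi (if_neg hd), zero_mul])
    have hB : ∀ i ∉ S, v i = 0 := by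
      intro i hi
      by_contra hd
      exact hne (by
        rw [prod_eq_zero (s := univ \ S) (mem_sdiff.mpr ⟨mem_univ i, hi⟩) (if_neg hd), mul_zero])
    refine ⟨fun i => v i / (p ^ s - 1), fun i hi => ?_, fun i => ?_⟩
    · simp [hB i hi]
    · have hd : (p ^ s - 1) ∣ v i := by
        by_cases hi : i ∈ S
        · exact hA i hi
        · rw [hB i hi]; exact dvd_zero _
      obtain ⟨k, hk⟩ := hd
      simp only [hk]
      rw [Nat.mul_div_cancel_left _ (by omega), Nat.sub_mul, one_mul]
      exact Nat.sub_add_cancel (Nat.le_mul_of_pos_left _ (by omega))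

end Expand
end DworkRat


namespace DworkRat
open Finset

section Final
variable (p : ℕ) [Fact p.Prime]

/-- The point count. -/
noncomputable def Nm (e n r : ℕ) (f : Fin r → MvPolynomial (Fin n) (AlgebraicClosure (ZMod p)))
    (m : ℕ) : ℕ :=
  Nat.card {x : Fin n → AlgebraicClosure (ZMod p) //
            (∀ j, MvPolynomial.eval x (f j) = 0) ∧
            ∀ i, (x i) ^ ((p ^ e) ^ m) = x i}

open Classical in
theorem Nm_eq (e n r : ℕ) (he : e ≠ 0)
    (f : Fin r → MvPolynomial (Fin n) (AlgebraicClosure (ZMod p))) (m : ℕ) (hm : m ≠ 0) :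
    Nm p e n r f m = ((Fintype.piFinset (fun _ : Fin n => Fs p (m * e))).filter
      (fun x => ∀ j, MvPolynomial.eval x (f j) = 0)).card := by
  rw [Nm]
  refine Nat.subtype_card _ fun x => ?_
  rw [mem_filter, Fintype.mem_piFinset, and_comm]
  refine and_congr Iff.rfl (forall_congr' fun i => ?_)
  rw [mem_Fs (mul_ne_zero hm he), mul_comm, pow_mul]

theorem Nm_le (e n r : ℕ) (he : e ≠ 0)
    (f : Fin r → MvPolynomial (Fin n) (AlgebraicClosure (ZMod p))) (m : ℕ) (hm : m ≠ 0) :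
    Nm p e n r f m ≤ ((p ^ e) ^ n) ^ m := by
  classical
  rw [Nm_eq p e n r he f m hm]
  refine (card_filter_le _ _).trans ?_
  rw [Fintype.card_piFinset, prod_const, card_Fs (mul_ne_zero hm he), card_univ, Fintype.card_fin,
    ← pow_mul, ← pow_mul, ← pow_mul]
  apply le_of_eq
  congr 1
  ring

theorem hankel_vanish (e n r : ℕ) (he : e ≠ 0)
    (f : Fin r → MvPolynomial (Fin n) (AlgebraicClosure (ZMod p)))
    (hf : ∀ j d, ((f j).coeff d) ^ (p ^ e) = (f j).coeff d) :
    ∃ k0, ∀ k ≥ k0, (Matrix.of fun i j : Fin k =>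
      (fun m : ℕ => if m = 0 then (0 : ℤ) else ((p ^ e : ℕ) ^ m : ℤ) ^ r * Nm p e n r f m)
        (i + j)).det = 0 := by
  classical
  obtain ⟨R, _, ⟨D⟩⟩ := exists_splitData p
  have hp := (Fact.out : p.Prime)
  have hchar := charP_om p
  let Φ := iterateFrobenius (AlgebraicClosure (ZMod p)) p e
  let g : MvPolynomial (Fin n ⊕ Fin r) (AlgebraicClosure (ZMod p)) :=
    ∑ j, MvPolynomial.X (Sum.inr j) * MvPolynomial.rename Sum.inl (f j)
  have hfΦ : ∀ j, MvPolynomial.map Φ (f j) = f j := by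
    intro j
    ext d
    rw [MvPolynomial.coeff_map]
    simp only [Φ, iterateFrobenius_def]
    exact hf j d
  have hgΦ : MvPolynomial.map Φ g = g := by
    simp only [g]
    rw [map_sum]
    refine sum_congr rfl fun j _ => ?_
    rw [map_mul, MvPolynomial.map_X, MvPolynomial.map_rename, hfΦ]
  have hg : ∀ k, g.coeff k ^ (p ^ e) = g.coeff k := by
    intro k
    conv_rhs => rw [← hgΦ, MvPolynomial.coeff_map]
    simp only [Φ, iterateFrobenius_def]
  have hevg : ∀ w : Fin n ⊕ Fin r → AlgebraicClosure (ZMod p), MvPolynomial.eval w g =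
      ∑ j, w (Sum.inr j) * MvPolynomial.eval (fun i => w (Sum.inl i)) (f j) := by
    intro w
    simp only [g]
    rw [map_sum]
    refine sum_congr rfl fun j _ => ?_
    rw [map_mul, MvPolynomial.eval_X, MvPolynomial.eval_rename]
    rfl
  obtain ⟨C1, hC1, hexp⟩ := expand_chi D e he g hg
  have hq : 2 ≤ p ^ e := hp.two_le.trans (Nat.le_self_pow he p)
  refine dwork_criterion D.l p hp.two_le D.hint
    (fun m : ℕ => if m = 0 then (0 : ℤ) else ((p ^ e : ℕ) ^ m : ℤ) ^ r * Nm p e n r f m)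
    ((p ^ e) ^ r * (p ^ e) ^ n) ?_ ?_
  · intro m
    split_ifs with hm
    · simp only [abs_zero]; positivity
    · have h1 := Nm_le p e n r he f m hm
      rw [abs_of_nonneg (by positivity)]
      have h2 : ((p ^ e) ^ m) ^ r * Nm p e n r f m ≤ ((p ^ e) ^ r * (p ^ e) ^ n) ^ m := by
        rw [mul_pow, ← pow_mul, ← pow_mul (p ^ e) r m, mul_comm r m]
        exact Nat.mul_le_mul_left _ h1
      exact_mod_cast h2
  · intro C
    refine ⟨∑ S : Finset (Fin n ⊕ Fin r),
      (S.card + 1) * ((C1 * C) ^ Fintype.card (Fin n ⊕ Fin r) + 1), fun M => ?_⟩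
    obtain ⟨T, _, b, a, h, hb, ha, hcong⟩ := hexp M
    refine ⟨∑ S : Finset (Fin n ⊕ Fin r), _, Good_sum _ _ _ fun S _ =>
      trace_good D.l D.l_reg (p ^ e) hq b a h hb C1 hC1 ha S C, fun m => ?_⟩
    rw [map_sum]
    simp only [PowerSeries.coeff_mk]
    by_cases hm : m = 0
    · simp [hm]
    · simp only [if_neg hm]
      have hs : m * e ≠ 0 := mul_ne_zero hm he
      have h1 := hcong m hm
      have hv : ∀ x ∈ Fintype.piFinset (fun _ : Fin n => Fs p (m * e)), ∀ j,
          MvPolynomial.eval x (f j) ∈ Fs p (m * e) := by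
        intro x hx j
        rw [Fintype.mem_piFinset] at hx
        rw [MvPolynomial.eval_eq']
        refine Fs_sum hs _ _ fun k _ => Fs_mul hs ?_ (Fs_prod hs _ _ fun i _ => Fs_pow hs (hx i) _)
        rw [mem_Fs hs, mul_comm, pow_mul]
        exact pow_fix (hf j k) m
      have h2 := count_chi D hs (fun x j => MvPolynomial.eval x (f j)) hv
      simp only [hevg] at h1
      rw [h2] at h1
      have hpe : p ^ (m * e) = (p ^ e) ^ m := by rw [mul_comm, pow_mul]
      have hpeR : (p : R) ^ (m * e) = ((p ^ e : ℕ) : R) ^ m := by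
        rw [mul_comm, pow_mul, Nat.cast_pow]
      convert h1 using 2
      · rw [Nm_eq p e n r he f m hm, hpeR]
        push_cast
        rfl
      · simp only [prod_teich D hs, mul_sum]
        rw [sum_comm]
        refine sum_congr rfl fun κ _ => sum_congr rfl fun S _ => ?_
        rw [hpeR, hpe]
        ring

theorem final (e : ℕ) (he : 1 ≤ e)
    (n r : ℕ) (f : Fin r → MvPolynomial (Fin n) (AlgebraicClosure (ZMod p)))
    (hf : ∀ j d, ((f j).coeff d) ^ (p ^ e) = (f j).coeff d) :
    ∃ a b : Polynomial ℚ, b ≠ 0 ∧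
      (b : PowerSeries ℚ) *
        PowerSeries.mk (fun m => if m = 0 then 0 else (Nm p e n r f m : ℚ)) =
          (a : PowerSeries ℚ) := by
  obtain ⟨k0, hk⟩ := hankel_vanish p e n r (by omega) f hf
  let N : ℕ → ℚ := fun m => if m = 0 then 0 else (Nm p e n r f m : ℚ)
  let Q : ℚ := ((p : ℚ) ^ e) ^ r
  have hQ : Q ≠ 0 := by
    have : (p : ℚ) ≠ 0 := by exact_mod_cast (Fact.out : p.Prime).ne_zero
    positivity
  obtain ⟨d, c, hc, hrec⟩ := kronecker (fun m => Q ^ m * N m) k0 (by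
    intro k hkk
    have h1 := congrArg (Int.castRingHom ℚ) (hk k hkk)
    rw [RingHom.map_det, map_zero] at h1
    rw [← h1]
    congr 1
    ext i j
    simp only [RingHom.mapMatrix_apply, Matrix.map_apply, Matrix.of_apply, N, Q]
    split_ifs with h
    · simp
    · simp only [eq_intCast]
      push_cast
      rw [← pow_mul, ← pow_mul, ← pow_mul, ← pow_mul]
      congr 2
      ring)
  obtain ⟨A, B, hB, hAB⟩ := rational_of_recurrence N d (fun l => c l * Q ^ l * (Q ^ d)⁻¹)
    (by rw [hc, one_mul, mul_inv_cancel₀ (pow_ne_zero _ hQ)]) (by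
      intro i
      have h1 := hrec i
      have h2 : (Q ^ i * Q ^ d) * ∑ l ∈ range (d + 1), c l * Q ^ l * (Q ^ d)⁻¹ * N (i + l) = 0 := by
        rw [← h1, mul_sum]
        refine sum_congr rfl fun l _ => ?_
        rw [pow_add]
        field_simp
      exact (mul_eq_zero.mp h2).resolve_left (mul_ne_zero (pow_ne_zero _ hQ) (pow_ne_zero _ hQ)))
  exact ⟨A, B, hB, hAB⟩

end Final
end DworkRat

open PowerSeries

/-- Rationality of the Poincaré series of an affine variety over a finite field (the
unquantified, Dwork, case): if the polynomials `f j` over `Ω = AlgebraicClosure (ZMod p)`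
have all coefficients fixed by `c ↦ c^q` (`q = p^e`), then the series whose `m`-th
coefficient counts common zeros with all coordinates in the subfield with `q^m` elements
is rational. -/
theorem affine_poincare_series_rational (p : ℕ) [Fact p.Prime] (e : ℕ) (he : 1 ≤ e)
    (n r : ℕ) (f : Fin r → MvPolynomial (Fin n) (AlgebraicClosure (ZMod p)))
    (hf : ∀ j d, ((f j).coeff d) ^ (p ^ e) = (f j).coeff d) :
    ∃ a b : Polynomial ℚ, b ≠ 0 ∧
      (b : PowerSeries ℚ) *
        PowerSeries.mk (fun m => if m = 0 then 0 else
          (Nat.card {x : Fin n → AlgebraicClosure (ZMod p) //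
            (∀ j, MvPolynomial.eval x (f j) = 0) ∧
            ∀ i, (x i) ^ ((p ^ e) ^ m) = x i} : ℚ)) = (a : PowerSeries ℚ) := by
  exact DworkRat.final p e he n r f hf
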